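/- arXiv:2008.12242 — 6 statements merged into one kernel-verified Lean document; each statement's English description precedes it below -/
import Mathlib

section
/- Let f_n, f : [0,∞) → [0,∞) be càdlàg with only nonnegative jumps, equal to 0 on [1,∞), and suppose f_n → f in the Skorohod sense on [0,1]. Let c_n, c : [0,∞) → [0,1] be continuous nondecreasing functions such that: (1) there exist λ_n ∈ [0,∞) and λ ∈ [0,∞) with c_n ≡ 0 on [0,λ_n] and c ≡ 0 on [0,λ]; (2) there exist μ_n ∈ (λ_n,∞) and μ ∈ (λ,∞) with c_n ≡ 1 on [μ_n,∞) and c ≡ 1 on [μ,∞); (3) c_n is strictly increasing on [λ_n,μ_n] and c is strictly increasing on [λ,μ]. If c_n → c uniformly on compact subsets of [0,∞), then f_n ∘ c_n → f ∘ c in the Skorohod sense on [0,r] for every r > 0 that is a continuity point of f ∘ c. -/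
open MeasureTheory Set Filter Topology

noncomputable section

/-- `g n → g∞` in the Skorohod sense on `[0,r]`: there are increasing homeomorphisms
`α n` of `[0,r]` with `sup_{[0,r]} |g n ∘ α n − g∞| → 0` and `sup_{[0,r]} |α n − id| → 0`. -/
def SkorConv (g : ℕ → ℝ → ℝ) (g0 : ℝ → ℝ) (r : ℝ) : Prop :=
  ∃ α : ℕ → ℝ → ℝ,
    (∀ n, ContinuousOn (α n) (Set.Icc 0 r) ∧ StrictMonoOn (α n) (Set.Icc 0 r) ∧
      α n 0 = 0 ∧ α n r = r ∧ Set.MapsTo (α n) (Set.Icc 0 r) (Set.Icc 0 r)) ∧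
    (∀ ε > (0:ℝ), ∃ N : ℕ, ∀ n ≥ N, ∀ t ∈ Set.Icc (0:ℝ) r,
      |g n (α n t) - g0 t| < ε ∧ |α n t - t| < ε)

/-! Let `α n` be time changes realising `fn → f`. On an interval `[a, b]` on which `c` takes values
strictly between `c 0` and `c r`, the equation `cn n (β t) = α n (c t)` has a unique solution
`β = (cn n)⁻¹ ∘ α n ∘ c`, along which `fn n ∘ cn n` matches `f ∘ c` up to the error of `fn n ∘ α n`.
As `α n (c t)` and `cn n (β t)` are close to `c t` and `c (β t)`, and `c` has a uniformly continuous
inverse where it is injective, `β` is close to the identity. On the remaining intervals `[0, a]` and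
`[b, r]` any extension of `β` will do, because `f` is continuous at `c 0` and `c r`, so that `fn n`
is almost constant near these points. -/

theorem exists_seq_forall_eventually {X : Type*} [Nonempty X] {P : ℝ → ℕ → X → Prop}
    (hmono : ∀ n x ε ε', ε ≤ ε' → P ε n x → P ε' n x)
    (h : ∀ ε > 0, ∀ᶠ n in atTop, ∃ x, P ε n x) :
    ∃ x : ℕ → X, ∀ ε > 0, ∀ᶠ n in atTop, P ε n (x n) := by
  classical
  let Q : ℕ → ℕ → Prop := fun n k => ∃ x, P (1 / ((k : ℝ) + 1)) n x
  -- `x n` is chosen for the largest precision `k ≤ n` that is attainable at stage `n`.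
  have best : ∀ n, ∃ x, ∀ k ≤ n, Q n k → P (1 / ((k : ℝ) + 1)) n x := by
    intro n
    by_cases hQ : ∃ k ≤ n, Q n k
    · obtain ⟨k, hk, hQk⟩ := hQ
      obtain ⟨x, hx⟩ := Nat.findGreatest_spec hk hQk
      exact ⟨x, fun j hj hQj => hmono _ _ _ _
        (Nat.one_div_le_one_div (Nat.le_findGreatest hj hQj)) hx⟩
    · exact ⟨Classical.arbitrary X, fun k hk hQk => (hQ ⟨k, hk, hQk⟩).elim⟩
  choose x hx using best
  refine ⟨x, fun ε hε => ?_⟩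
  obtain ⟨k, hk⟩ := exists_nat_one_div_lt hε
  filter_upwards [h _ Nat.one_div_pos_of_nat, eventually_ge_atTop k] with n hQ hkn
  exact hmono _ _ _ _ hk.le (hx n k hkn hQ)

theorem exists_pos_forall_dist_image_lt_imp_dist_lt {X Y : Type*} [PseudoMetricSpace X]
    [MetricSpace Y] {c : X → Y} {K L : Set X} (hK : IsCompact K) (hL : IsCompact L)
    (hcK : ContinuousOn c K) (hcL : ContinuousOn c L)
    (hinj : ∀ s ∈ K, ∀ t ∈ L, c s = c t → s = t) {δ : ℝ} (hδ : 0 < δ) :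
    ∃ η > 0, ∀ s ∈ K, ∀ t ∈ L, dist (c s) (c t) < η → dist s t < δ := by
  let far : Set (X × X) := (K ×ˢ L) ∩ {z | δ ≤ dist z.1 z.2}
  have hfar : IsCompact far :=
    (hK.prod hL).inter_right (isClosed_le continuous_const continuous_dist)
  have hcont : ContinuousOn (fun z : X × X => dist (c z.1) (c z.2)) far :=
    continuous_dist.comp_continuousOn
      ((hcK.comp continuousOn_fst fun _ hz => hz.1.1).prodMk
        (hcL.comp continuousOn_snd fun _ hz => hz.1.2))
  have hpos : ∀ z ∈ far, 0 < dist (c z.1) (c z.2) := by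
    rintro ⟨s, t⟩ ⟨⟨hs, ht⟩, hst⟩
    refine dist_pos.2 fun heq => ?_
    obtain rfl : s = t := hinj s hs t ht heq
    exact hδ.not_ge (hst.trans_eq (dist_self s))
  obtain ⟨η, hη, hle⟩ := hfar.exists_forall_le' hcont hpos
  exact ⟨η, hη, fun s hs t ht hlt => not_le.1 fun hst =>
    (hle (s, t) ⟨⟨hs, ht⟩, hst⟩).not_gt hlt⟩

/-- `β` restricts to an increasing homeomorphism of `[a, b]` onto `[p, q]`; its values outside
`[a, b]` are arbitrary. These are the time changes allowed in Skorohod convergence. -/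
structure IncrHomeoOn (β : ℝ → ℝ) (a b p q : ℝ) : Prop where
  continuousOn : ContinuousOn β (Icc a b)
  strictMonoOn : StrictMonoOn β (Icc a b)
  map_left : β a = p
  map_right : β b = q

namespace IncrHomeoOn

variable {β γ : ℝ → ℝ} {a b m p q n u v : ℝ}

theorem refl (a b : ℝ) : IncrHomeoOn id a b a b :=
  ⟨continuousOn_id, strictMonoOn_id, rfl, rfl⟩

theorem mapsTo (h : IncrHomeoOn β a b p q) : MapsTo β (Icc a b) (Icc p q) := fun _ ht =>
  have hab := ht.1.trans ht.2
  ⟨h.map_left ▸ h.strictMonoOn.monotoneOn (left_mem_Icc.2 hab) ht ht.1,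
    h.map_right ▸ h.strictMonoOn.monotoneOn ht (right_mem_Icc.2 hab) ht.2⟩

theorem surjOn (h : IncrHomeoOn β a b p q) (hab : a ≤ b) : SurjOn β (Icc a b) (Icc p q) :=
  h.map_left ▸ h.map_right ▸ intermediate_value_Icc hab h.continuousOn

theorem comp (hγ : IncrHomeoOn γ p q u v) (hβ : IncrHomeoOn β a b p q) :
    IncrHomeoOn (γ ∘ β) a b u v where
  continuousOn := hγ.continuousOn.comp hβ.continuousOn hβ.mapsTo
  strictMonoOn := hγ.strictMonoOn.comp hβ.strictMonoOn hβ.mapsTo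
  map_left := by rw [Function.comp_apply, hβ.map_left, hγ.map_left]
  map_right := by rw [Function.comp_apply, hβ.map_right, hγ.map_right]

theorem mono (h : IncrHomeoOn β a b p q) (hu : a ≤ u) (hv : v ≤ b) :
    IncrHomeoOn β u v (β u) (β v) :=
  have hsub := Icc_subset_Icc hu hv
  ⟨h.continuousOn.mono hsub, h.strictMonoOn.mono hsub, rfl, rfl⟩

theorem exists_rightInverse (h : IncrHomeoOn β a b p q) (hab : a ≤ b) :
    ∃ γ, IncrHomeoOn γ p q a b ∧ RightInvOn γ β (Icc p q) := by
  have hpq : p ≤ q := nonempty_Icc.1 ⟨_, h.mapsTo (left_mem_Icc.2 hab)⟩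
  let e : Icc a b ≃o Icc p q := StrictMono.orderIsoOfSurjective h.mapsTo.restrict
    (fun s t hst => h.strictMonoOn s.2 t.2 hst)
    (h.mapsTo.restrict_surjective_iff.2 (h.surjOn hab))
  have he : ∀ t : Icc a b, (e t : ℝ) = β t := fun _ => rfl
  let γ : ℝ → ℝ := fun x => e.symm (projIcc p q hpq x)
  have hγ : ∀ x (hx : x ∈ Icc p q), γ x = e.symm ⟨x, hx⟩ := fun x hx =>
    congrArg (fun z => (e.symm z : ℝ)) (projIcc_of_mem hpq hx)
  have hβγ : RightInvOn γ β (Icc p q) := fun x hx => by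
    rw [hγ x hx, ← he, e.apply_symm_apply]
  have hmem : MapsTo γ (Icc p q) (Icc a b) := fun x _ => (e.symm _).2
  refine ⟨γ, ⟨?_, fun x hx y hy hxy => ?_, ?_, ?_⟩, hβγ⟩
  · exact (continuous_subtype_val.comp
      (e.symm.continuous.comp continuous_projIcc)).continuousOn
  · rw [hγ x hx, hγ y hy]
    exact e.symm.strictMono hxy
  · have hp := left_mem_Icc.2 hpq
    exact h.strictMonoOn.injOn (hmem hp) (left_mem_Icc.2 hab) ((hβγ hp).trans h.map_left.symm)
  · have hq := right_mem_Icc.2 hpq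
    exact h.strictMonoOn.injOn (hmem hq) (right_mem_Icc.2 hab) ((hβγ hq).trans h.map_right.symm)

theorem exists_glue (hβ : IncrHomeoOn β a m p n) (hγ : IncrHomeoOn γ m b n q) (ham : a ≤ m)
    (hmb : m ≤ b) :
    ∃ θ, IncrHomeoOn θ a b p q ∧ EqOn θ β (Icc a m) ∧ EqOn θ γ (Icc m b) := by
  let θ : ℝ → ℝ := fun t => if t ≤ m then β t else γ t
  have hθβ : EqOn θ β (Icc a m) := fun t ht => if_pos ht.2
  have hθγ : EqOn θ γ (Icc m b) := by
    intro t ht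
    rcases ht.1.eq_or_lt with rfl | hlt
    · exact (if_pos le_rfl).trans (hβ.map_right.trans hγ.map_left.symm)
    · exact if_neg hlt.not_ge
  refine ⟨θ, ⟨?_, ?_, ?_, ?_⟩, hθβ, hθγ⟩
  · rw [← Icc_union_Icc_eq_Icc ham hmb]
    exact (hβ.continuousOn.congr hθβ).union_of_isClosed (hγ.continuousOn.congr hθγ)
      isClosed_Icc isClosed_Icc
  · rw [← Icc_union_Icc_eq_Icc ham hmb]
    exact (hβ.strictMonoOn.congr hθβ.symm).union (hγ.strictMonoOn.congr hθγ.symm)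
      (isGreatest_Icc ham) (isLeast_Icc hmb)
  · exact (hθβ (left_mem_Icc.2 ham)).trans hβ.map_left
  · exact (hθγ (right_mem_Icc.2 hmb)).trans hγ.map_right

theorem exists_abs_sub_lt {ε : ℝ} (hab : a < b) (hpq : p < q) (hp : |p - a| < ε)
    (hq : |q - b| < ε) : ∃ β, IncrHomeoOn β a b p q ∧ ∀ t ∈ Icc a b, |β t - t| < ε := by
  have hba : 0 < b - a := sub_pos.2 hab
  let w : ℝ → ℝ := fun t => (t - a) / (b - a)
  refine ⟨fun t => p + w t * (q - p), ⟨by fun_prop, fun s _ t _ hst => ?_, by simp [w], ?_⟩,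
    fun t ht => ?_⟩
  · have hw : w s < w t := div_lt_div_of_pos_right (sub_lt_sub_right hst a) hba
    exact add_lt_add_right (mul_lt_mul_of_pos_right hw (sub_pos.2 hpq)) p
  · simp [w, hba.ne']
  · have hw₀ : 0 ≤ w t := div_nonneg (sub_nonneg.2 ht.1) hba.le
    have hw₁ : w t ≤ 1 := (div_le_one hba).2 (by linarith [ht.2])
    have ht_eq : w t * (b - a) = t - a := div_mul_cancel₀ _ hba.ne'
    have hconv : p + w t * (q - p) - t = (1 - w t) * (p - a) + w t * (q - b) := by
      linear_combination ht_eq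
    rw [hconv]
    exact abs_lt.2 (convex_Ioo (-ε) ε (abs_lt.1 hp) (abs_lt.1 hq) (sub_nonneg.2 hw₁) hw₀
      (sub_add_cancel 1 (w t)))

theorem exists_extension {r ε : ℝ} (hβ : IncrHomeoOn β a b p q) (ha : 0 < a) (hab : a ≤ b)
    (hbr : b < r) (hp : 0 < p) (hq : q < r) (hclose : ∀ t ∈ Icc a b, |β t - t| < ε) :
    ∃ γ, IncrHomeoOn γ 0 r 0 r ∧ EqOn γ β (Icc a b) ∧ MapsTo γ (Icc 0 a) (Icc 0 p) ∧
      MapsTo γ (Icc b r) (Icc q r) ∧ ∀ t ∈ Icc 0 r, |γ t - t| < ε := by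
  have hpa : |p - a| < ε := hβ.map_left ▸ hclose a (left_mem_Icc.2 hab)
  have hqb : |q - b| < ε := hβ.map_right ▸ hclose b (right_mem_Icc.2 hab)
  have hε : |(0 : ℝ)| < ε := by simpa using (abs_nonneg _).trans_lt hpa
  obtain ⟨β₀, hβ₀, hclose₀⟩ := exists_abs_sub_lt ha hp (by simpa using hε) hpa
  obtain ⟨β₁, hβ₁, hclose₁⟩ := exists_abs_sub_lt hbr hq hqb (by simpa using hε)
  obtain ⟨θ, hθ, hθβ₀, hθβ⟩ := hβ₀.exists_glue hβ ha.le hab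
  obtain ⟨γ, hγ, hγθ, hγβ₁⟩ := hθ.exists_glue hβ₁ (ha.le.trans hab) hbr.le
  have hγβ₀ : EqOn γ β₀ (Icc 0 a) := (hγθ.mono (Icc_subset_Icc_right hab)).trans hθβ₀
  have hγβ : EqOn γ β (Icc a b) := (hγθ.mono (Icc_subset_Icc_left ha.le)).trans hθβ
  refine ⟨γ, hγ, hγβ, hβ₀.mapsTo.congr hγβ₀.symm, hβ₁.mapsTo.congr hγβ₁.symm, fun t ht => ?_⟩
  rcases le_total t a with hta | hta
  · rw [hγβ₀ ⟨ht.1, hta⟩]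
    exact hclose₀ t ⟨ht.1, hta⟩
  rcases le_total t b with htb | htb
  · rw [hγβ ⟨hta, htb⟩]
    exact hclose t ⟨hta, htb⟩
  · rw [hγβ₁ ⟨htb, ht.2⟩]
    exact hclose₁ t ⟨htb, ht.2⟩

end IncrHomeoOn

namespace SkorConv

variable {g : ℕ → ℝ → ℝ} {g₀ : ℝ → ℝ} {r : ℝ}

theorem exists_incrHomeoOn (h : SkorConv g g₀ r) :
    ∃ α : ℕ → ℝ → ℝ, (∀ n, IncrHomeoOn (α n) 0 r 0 r) ∧
      TendstoUniformlyOn (fun n => g n ∘ α n) g₀ atTop (Icc 0 r) ∧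
      TendstoUniformlyOn α id atTop (Icc 0 r) := by
  obtain ⟨α, hα, hconv⟩ := h
  refine ⟨α, fun n => ⟨(hα n).1, (hα n).2.1, (hα n).2.2.1, (hα n).2.2.2.1⟩, ?_, ?_⟩ <;>
    refine Metric.tendstoUniformlyOn_iff.2 fun ε hε =>
      (eventually_atTop.2 (hconv ε hε)).mono fun n hn t ht => ?_
  · exact (dist_comm _ _).trans_lt (hn t ht).1
  · exact (dist_comm _ _).trans_lt (hn t ht).2

theorem of_forall_eventually_exists
    (h : ∀ ε > 0, ∀ᶠ n in atTop, ∃ β, IncrHomeoOn β 0 r 0 r ∧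
      ∀ t ∈ Icc 0 r, |g n (β t) - g₀ t| < ε ∧ |β t - t| < ε) : SkorConv g g₀ r := by
  have : Nonempty {β // IncrHomeoOn β 0 r 0 r} := ⟨⟨id, .refl 0 r⟩⟩
  obtain ⟨α, hα⟩ := exists_seq_forall_eventually (X := {β // IncrHomeoOn β 0 r 0 r})
    (P := fun ε n β => ∀ t ∈ Icc 0 r, |g n (β.1 t) - g₀ t| < ε ∧ |β.1 t - t| < ε)
    (fun _ _ _ _ hle hβ t ht => ⟨(hβ t ht).1.trans_le hle, (hβ t ht).2.trans_le hle⟩)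
    (fun ε hε => (h ε hε).mono fun _ ⟨β, hβ, hclose⟩ => ⟨⟨β, hβ⟩, hclose⟩)
  exact ⟨fun n => (α n).1, fun n => ⟨(α n).2.continuousOn, (α n).2.strictMonoOn,
    (α n).2.map_left, (α n).2.map_right, (α n).2.mapsTo⟩,
    fun ε hε => eventually_atTop.1 (hα ε hε)⟩

theorem exists_pos_eventually_abs_sub_lt (h : SkorConv g g₀ r) {x : ℝ}
    (hx : ContinuousWithinAt g₀ (Icc 0 r) x) {ε : ℝ} (hε : 0 < ε) :
    ∃ δ > 0, ∀ᶠ n in atTop, ∀ u ∈ Icc 0 r ∩ Ioo (x - δ) (x + δ),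
      ∀ v ∈ Icc 0 r ∩ Ioo (x - δ) (x + δ), |g n v - g₀ u| < ε := by
  obtain ⟨α, hα, hgα, hαid⟩ := h.exists_incrHomeoOn
  obtain ⟨δ, hδ, hg₀⟩ := Metric.continuousWithinAt_iff.1 hx (ε / 3) (by positivity)
  refine ⟨δ / 2, half_pos hδ, ?_⟩
  filter_upwards [Metric.tendstoUniformlyOn_iff.1 hgα (ε / 3) (by positivity),
    Metric.tendstoUniformlyOn_iff.1 hαid (δ / 2) (half_pos hδ)]
    with n hgα hαid u ⟨hu, hux⟩ v ⟨hv, hvx⟩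
  obtain ⟨w, hw, rfl⟩ := (hα n).surjOn (hu.1.trans hu.2) hv
  have hgw : |g₀ w - g n (α n w)| < ε / 3 := hgα w hw
  have hαw : |w - α n w| < δ / 2 := hαid w hw
  have hwx : |w - x| < δ := by
    rw [abs_lt] at hαw ⊢
    constructor <;> linarith [hvx.1, hvx.2]
  have hux' : |u - x| < δ := abs_lt.2 ⟨by linarith [hux.1], by linarith [hux.2]⟩
  have hg₀w : |g₀ w - g₀ x| < ε / 3 := hg₀ hw hwx
  have hg₀u : |g₀ u - g₀ x| < ε / 3 := hg₀ hu hux'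
  rw [abs_lt] at *
  constructor <;> linarith

theorem exists_pos_eventually_abs_sub_lt_Icc (h : SkorConv g g₀ r) {x : ℝ}
    (hx : ContinuousWithinAt g₀ (Icc 0 r) x) {ε : ℝ} (hε : 0 < ε) :
    ∃ δ > 0, ∀ (p q : ℕ → ℝ) (p₀ q₀ : ℝ), (∀ n, p n ∈ Icc 0 r) → (∀ n, q n ∈ Icc 0 r) →
      Tendsto p atTop (𝓝 p₀) → Tendsto q atTop (𝓝 q₀) →
      p₀ ∈ Ioo (x - δ) (x + δ) → q₀ ∈ Ioo (x - δ) (x + δ) →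
      ∀ᶠ n in atTop, ∀ u ∈ Icc p₀ q₀, ∀ v ∈ Icc (p n) (q n), |g n v - g₀ u| < ε := by
  obtain ⟨δ, hδ, hnear⟩ := h.exists_pos_eventually_abs_sub_lt hx hε
  refine ⟨δ, hδ, fun p q p₀ q₀ hp hq hp_lim hq_lim hp₀ hq₀ => ?_⟩
  have hS : (Icc 0 r ∩ Ioo (x - δ) (x + δ)).OrdConnected := ordConnected_Icc.inter ordConnected_Ioo
  have hp₀_mem : p₀ ∈ Icc 0 r := isClosed_Icc.mem_of_tendsto hp_lim (.of_forall hp)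
  have hq₀_mem : q₀ ∈ Icc 0 r := isClosed_Icc.mem_of_tendsto hq_lim (.of_forall hq)
  filter_upwards [hnear, hp_lim (isOpen_Ioo.mem_nhds hp₀), hq_lim (isOpen_Ioo.mem_nhds hq₀)]
    with n hnear hpn hqn u hu v hv
  exact hnear u (hS.out ⟨hp₀_mem, hp₀⟩ ⟨hq₀_mem, hq₀⟩ hu) v (hS.out ⟨hp n, hpn⟩ ⟨hq n, hqn⟩ hv)

end SkorConv

/-- On `[0, r]`, the function `c` is a continuous nondecreasing time change with values in `[0, T]`
that is strictly increasing wherever it differs from the two extreme values `0` and `T`. -/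
structure IsTimeChange (c : ℝ → ℝ) (r T : ℝ) : Prop where
  continuousOn : ContinuousOn c (Icc 0 r)
  monotoneOn : MonotoneOn c (Icc 0 r)
  mapsTo : MapsTo c (Icc 0 r) (Icc 0 T)
  injOn : InjOn c (Icc 0 r ∩ c ⁻¹' Ioo 0 T)

namespace IsTimeChange

variable {c : ℝ → ℝ} {r T : ℝ}

theorem of_strictMonoOn_Icc {lam mu : ℝ} (hcont : ContinuousOn c (Ici 0))
    (hmono : MonotoneOn c (Ici 0)) (hrange : ∀ t ≥ 0, c t ∈ Icc 0 T)
    (hzero : ∀ t ∈ Icc 0 lam, c t = 0) (hT : ∀ t ≥ mu, c t = T)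
    (hstrict : StrictMonoOn c (Icc lam mu)) (r : ℝ) : IsTimeChange c r T where
  continuousOn := hcont.mono Icc_subset_Ici_self
  monotoneOn := hmono.mono Icc_subset_Ici_self
  mapsTo _ ht := hrange _ ht.1
  injOn := by
    rintro s ⟨hs, hcs⟩ t ⟨ht, hct⟩
    have hmem : ∀ u ∈ Icc 0 r, c u ∈ Ioo 0 T → u ∈ Icc lam mu := fun u hu hcu =>
      ⟨(not_le.1 fun hle => hcu.1.ne' (hzero u ⟨hu.1, hle⟩)).le,
        (not_le.1 fun hle => hcu.2.ne (hT u hle)).le⟩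
    exact hstrict.injOn (hmem s hs hcs) (hmem t ht hct)

theorem eq_of_image_eq (hc : IsTimeChange c r T) {s t : ℝ} (hs : s ∈ Icc 0 r) (ht : t ∈ Icc 0 r)
    (hct : c t ∈ Ioo 0 T) (heq : c s = c t) : s = t :=
  hc.injOn ⟨hs, mem_preimage.2 (heq ▸ hct)⟩ ⟨ht, hct⟩ heq

theorem exists_incrHomeoOn (hc : IsTimeChange c r T) (hr : 0 ≤ r) {x y : ℝ} (hx : c 0 < x)
    (hxy : x < y) (hy : y < c r) :
    ∃ a b, 0 < a ∧ a < b ∧ b < r ∧ IncrHomeoOn c a b x y ∧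
      MapsTo c (Icc 0 a) (Icc (c 0) x) ∧ MapsTo c (Icc b r) (Icc y (c r)) := by
  have hivt : Icc (c 0) (c r) ⊆ c '' Icc 0 r := intermediate_value_Icc hr hc.continuousOn
  obtain ⟨a, ha, rfl⟩ := hivt ⟨hx.le, (hxy.trans hy).le⟩
  obtain ⟨b, hb, rfl⟩ := hivt ⟨(hx.trans hxy).le, hy.le⟩
  have h0 : 0 ≤ c 0 := (hc.mapsTo (left_mem_Icc.2 hr)).1
  have hT : c r ≤ T := (hc.mapsTo (right_mem_Icc.2 hr)).2
  have hsub : Icc a b ⊆ Icc 0 r := Icc_subset_Icc ha.1 hb.2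
  have hab : a < b := hc.monotoneOn.reflect_lt ha hb hxy
  have hmem : Icc a b ⊆ Icc 0 r ∩ c ⁻¹' Ioo 0 T := fun t ht =>
    ⟨hsub ht, (h0.trans_lt hx).trans_le (hc.monotoneOn ha (hsub ht) ht.1),
      (hc.monotoneOn (hsub ht) hb ht.2).trans_lt (hy.trans_le hT)⟩
  exact ⟨a, b, hc.monotoneOn.reflect_lt (left_mem_Icc.2 hr) ha hx, hab,
    hc.monotoneOn.reflect_lt hb (right_mem_Icc.2 hr) hy, ⟨hc.continuousOn.mono hsub,
    (hc.monotoneOn.mono hsub).strictMonoOn_of_injOn (hc.injOn.mono hmem), rfl, rfl⟩,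
    (hc.monotoneOn.mono (Icc_subset_Icc_right ha.2)).mapsTo_Icc,
    (hc.monotoneOn.mono (Icc_subset_Icc_left hb.1)).mapsTo_Icc⟩

theorem exists_incrHomeoOn_near_ends (hc : IsTimeChange c r T) (hr : 0 ≤ r) (hlt : c 0 < c r)
    {δ₀ δᵣ : ℝ} (hδ₀ : 0 < δ₀) (hδᵣ : 0 < δᵣ) :
    ∃ x y a b, c 0 < x ∧ x < y ∧ y < c r ∧ x < c 0 + δ₀ ∧ c r - δᵣ < y ∧
      0 < a ∧ a < b ∧ b < r ∧ IncrHomeoOn c a b x y ∧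
      MapsTo c (Icc 0 a) (Icc (c 0) x) ∧ MapsTo c (Icc b r) (Icc y (c r)) := by
  obtain ⟨x, hx, hx'⟩ := exists_between (lt_min hlt (lt_add_of_pos_right (c 0) hδ₀))
  obtain ⟨hxr, hxδ⟩ := lt_min_iff.1 hx'
  obtain ⟨y, hy', hy⟩ := exists_between (max_lt hxr (sub_lt_self (c r) hδᵣ))
  obtain ⟨hxy, hyδ⟩ := max_lt_iff.1 hy'
  obtain ⟨a, b, hab⟩ := hc.exists_incrHomeoOn hr hx hxy hy
  exact ⟨x, y, a, b, hx, hxy, hy, hxδ, hyδ, hab⟩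

theorem eventually_abs_sub_lt_of_image_eq (hc : IsTimeChange c r T) {cn φ : ℕ → ℝ → ℝ}
    {a b ε : ℝ} (hsub : Icc a b ⊆ Icc 0 r) (hmem : MapsTo c (Icc a b) (Ioo 0 T))
    (hcn : TendstoUniformlyOn cn c atTop (Icc 0 r)) (hφ : TendstoUniformlyOn φ c atTop (Icc a b))
    (hε : 0 < ε) :
    ∀ᶠ n in atTop, ∀ s ∈ Icc 0 r, ∀ t ∈ Icc a b, cn n s = φ n t → |s - t| < ε := by
  obtain ⟨η, hη, hinv⟩ := exists_pos_forall_dist_image_lt_imp_dist_lt isCompact_Icc isCompact_Icc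
    hc.continuousOn (hc.continuousOn.mono hsub)
    (fun s hs t ht => hc.eq_of_image_eq hs (hsub ht) (hmem ht)) hε
  filter_upwards [Metric.tendstoUniformlyOn_iff.1 hcn (η / 2) (half_pos hη),
    Metric.tendstoUniformlyOn_iff.1 hφ (η / 2) (half_pos hη)] with n hcn hφ s hs t ht heq
  refine hinv s hs t ht ?_
  calc dist (c s) (c t) ≤ dist (c s) (cn n s) + dist (c t) (φ n t) := by
        rw [heq]
        exact dist_triangle_right _ _ _
    _ < η := (add_lt_add (hcn s hs) (hφ t ht)).trans_eq (add_halves η)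

theorem exists_incrHomeoOn_abs_sub_lt (hc : IsTimeChange c r T) {φ F G : ℝ → ℝ}
    {a b x y ε : ℝ} (hφ : IncrHomeoOn φ a b x y) (ha : 0 < a) (hab : a < b) (hbr : b < r)
    (hx : c 0 < x) (hy : y < c r)
    (hclose : ∀ s ∈ Icc 0 r, ∀ t ∈ Icc a b, c s = φ t → |s - t| < ε)
    (hleft : ∀ t ∈ Icc 0 a, ∀ v ∈ Icc (c 0) x, |F v - G t| < ε)
    (hmid : ∀ t ∈ Icc a b, |F (φ t) - G t| < ε)
    (hright : ∀ t ∈ Icc b r, ∀ v ∈ Icc y (c r), |F v - G t| < ε) :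
    ∃ γ, IncrHomeoOn γ 0 r 0 r ∧ ∀ t ∈ Icc 0 r, |F (c (γ t)) - G t| < ε ∧ |γ t - t| < ε := by
  have hr : 0 ≤ r := (ha.trans (hab.trans hbr)).le
  have hxy : x < y := hφ.map_left ▸ hφ.map_right ▸
    hφ.strictMonoOn (left_mem_Icc.2 hab.le) (right_mem_Icc.2 hab.le) hab
  obtain ⟨p, q, hp, hpq, hq, hcpq, hcp, hcq⟩ := hc.exists_incrHomeoOn hr hx hxy hy
  obtain ⟨σ, hσ, hcσ⟩ := hcpq.exists_rightInverse hpq.le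
  have hβ : IncrHomeoOn (σ ∘ φ) a b p q := hσ.comp hφ
  have hcβ : ∀ t ∈ Icc a b, c ((σ ∘ φ) t) = φ t := fun t ht => hcσ (hφ.mapsTo ht)
  have hsub : Icc p q ⊆ Icc 0 r := Icc_subset_Icc hp.le hq.le
  have hβclose : ∀ t ∈ Icc a b, |(σ ∘ φ) t - t| < ε := fun t ht =>
    hclose _ (hsub (hβ.mapsTo ht)) t ht (hcβ t ht)
  obtain ⟨γ, hγ, hγβ, hγleft, hγright, hγclose⟩ :=
    hβ.exists_extension ha hab.le hbr hp hq hβclose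
  refine ⟨γ, hγ, fun t ht => ⟨?_, hγclose t ht⟩⟩
  rcases le_total t a with hta | hta
  · exact hleft t ⟨ht.1, hta⟩ _ (hcp (hγleft ⟨ht.1, hta⟩))
  rcases le_total t b with htb | htb
  · rw [hγβ ⟨hta, htb⟩, hcβ t ⟨hta, htb⟩]
    exact hmid t ⟨hta, htb⟩
  · exact hright t ⟨htb, ht.2⟩ _ (hcq (hγright ⟨htb, ht.2⟩))

theorem tendsto_nhdsLT (hc : IsTimeChange c r T) (hr : 0 < r) (hcr : c r ∈ Ioo 0 T) :
    Tendsto c (𝓝[<] r) (𝓝[<] (c r)) := by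
  have hr_mem : r ∈ Icc 0 r := right_mem_Icc.2 hr.le
  have hIcc : Icc 0 r ∈ 𝓝[<] r := Icc_mem_nhdsLT hr
  refine tendsto_nhdsWithin_iff.2 ⟨(hc.continuousOn r hr_mem).mono_left
    (nhdsWithin_le_of_mem hIcc), ?_⟩
  filter_upwards [hIcc, self_mem_nhdsWithin] with t ht htr
  exact (hc.monotoneOn ht hr_mem ht.2).lt_of_ne fun heq =>
    htr.ne (hc.eq_of_image_eq ht hr_mem hcr heq)

theorem continuousWithinAt_of_comp (hc : IsTimeChange c r T) (hr : 0 < r) {f : ℝ → ℝ}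
    (hrc : ∀ t ∈ Ico 0 T, ContinuousWithinAt f (Ici t) t)
    (hll : ∀ t ∈ Ioo 0 T, ∃ L, Tendsto f (𝓝[<] t) (𝓝 L))
    (hT : ContinuousWithinAt f (Iio T) T)
    (hfc : ContinuousWithinAt (fun t => f (c t)) (Iio r) r) :
    ContinuousWithinAt f (Icc 0 T) (c r) := by
  have hcr : c r ∈ Icc 0 T := hc.mapsTo (right_mem_Icc.2 hr.le)
  rcases hcr.2.eq_or_lt with heq | hlt
  · rw [heq]
    exact (continuousWithinAt_Iio_iff_Iic.1 hT).mono Icc_subset_Iic_self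
  rcases hcr.1.eq_or_lt with heq | hpos
  · exact (hrc (c r) ⟨hcr.1, hlt⟩).mono (heq ▸ Icc_subset_Ici_self)
  · obtain ⟨L, hL⟩ := hll (c r) ⟨hpos, hlt⟩
    obtain rfl : L = f (c r) :=
      tendsto_nhds_unique (hL.comp (hc.tendsto_nhdsLT hr ⟨hpos, hlt⟩)) hfc
    have hleft : ContinuousWithinAt f (Iio (c r)) (c r) := hL
    exact (continuousAt_iff_continuous_left_right.2
      ⟨continuousWithinAt_Iio_iff_Iic.1 hleft, hrc (c r) ⟨hcr.1, hlt⟩⟩).continuousWithinAt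

end IsTimeChange

theorem continuousWithinAt_Iio_of_nonneg_of_eq_zero {f : ℝ → ℝ} {T : ℝ} (hT : 0 < T)
    (hf : ∀ t ≥ 0, 0 ≤ f t) (hfT : f T = 0) (hll : ∃ L, Tendsto f (𝓝[<] T) (𝓝 L) ∧ L ≤ f T) :
    ContinuousWithinAt f (Iio T) T := by
  obtain ⟨L, hL, hLle⟩ := hll
  have hL0 : 0 ≤ L := ge_of_tendsto hL <| by
    filter_upwards [Ioo_mem_nhdsLT hT] with t ht using hf t ht.1.le
  obtain rfl : L = f T := le_antisymm hLle (hfT.trans_le hL0)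
  exact hL

section Composition

variable {f c : ℝ → ℝ} {fn cn : ℕ → ℝ → ℝ} {r T : ℝ}

theorem skorConv_comp_of_eqOn_const {x : ℝ} (hconv : SkorConv fn f T) (hx : x ∈ Icc 0 T)
    (hf : ContinuousWithinAt f (Icc 0 T) x) (hc : EqOn c (fun _ => x) (Icc 0 r))
    (hcn : ∀ n, MapsTo (cn n) (Icc 0 r) (Icc 0 T))
    (hucc : TendstoUniformlyOn cn c atTop (Icc 0 r)) :
    SkorConv (fun n t => fn n (cn n t)) (fun t => f (c t)) r := by
  refine .of_forall_eventually_exists fun ε hε => ?_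
  obtain ⟨δ, hδ, hfn⟩ := hconv.exists_pos_eventually_abs_sub_lt hf hε
  filter_upwards [hfn, Metric.tendstoUniformlyOn_iff.1 hucc δ hδ] with n hfn hcnc
  refine ⟨id, .refl 0 r, fun t ht => ⟨?_, by simpa using hε⟩⟩
  have hct : c t = x := hc ht
  rw [hct]
  refine hfn x ⟨hx, sub_lt_self _ hδ, lt_add_of_pos_right _ hδ⟩ _ ⟨hcn n ht, ?_⟩
  rw [← Real.ball_eq_Ioo, ← hct]
  exact Metric.mem_ball'.2 (hcnc t ht)

theorem skorConv_comp_of_image_lt (hr : 0 ≤ r) (hconv : SkorConv fn f T)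
    (hf₀ : ContinuousWithinAt f (Icc 0 T) (c 0)) (hfr : ContinuousWithinAt f (Icc 0 T) (c r))
    (hc : IsTimeChange c r T) (hcn : ∀ n, IsTimeChange (cn n) r T)
    (hucc : TendstoUniformlyOn cn c atTop (Icc 0 r)) (hlt : c 0 < c r) :
    SkorConv (fun n t => fn n (cn n t)) (fun t => f (c t)) r := by
  refine .of_forall_eventually_exists fun ε hε => ?_
  obtain ⟨α, hα, hfα, hαid⟩ := hconv.exists_incrHomeoOn
  obtain ⟨δ₀, hδ₀, hnear₀⟩ := hconv.exists_pos_eventually_abs_sub_lt_Icc hf₀ hε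
  obtain ⟨δᵣ, hδᵣ, hnearᵣ⟩ := hconv.exists_pos_eventually_abs_sub_lt_Icc hfr hε
  obtain ⟨x, y, a, b, hx, hxy, hy, hxδ, hyδ, ha, hab, hbr, hcab, hca, hcb⟩ :=
    hc.exists_incrHomeoOn_near_ends hr hlt hδ₀ hδᵣ
  have h0_mem : (0 : ℝ) ∈ Icc 0 r := left_mem_Icc.2 hr
  have hr_mem : r ∈ Icc 0 r := right_mem_Icc.2 hr
  have hsub : Icc a b ⊆ Icc 0 r := Icc_subset_Icc ha.le hbr.le
  have hxyT : Icc x y ⊆ Ioo 0 T :=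
    Icc_subset_Ioo ((hc.mapsTo h0_mem).1.trans_lt hx) (hy.trans_le (hc.mapsTo hr_mem).2)
  have hx_mem : x ∈ Icc 0 T := Ioo_subset_Icc_self (hxyT (left_mem_Icc.2 hxy.le))
  have hy_mem : y ∈ Icc 0 T := Ioo_subset_Icc_self (hxyT (right_mem_Icc.2 hxy.le))
  have hαc : TendstoUniformlyOn (fun n => α n ∘ c) c atTop (Icc a b) :=
    (hαid.comp c).mono fun t ht => hc.mapsTo (hsub ht)
  have hfαc : TendstoUniformlyOn (fun n t => fn n (α n (c t))) (fun t => f (c t)) atTop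
    (Icc a b) := (hfα.comp c).mono fun t ht => hc.mapsTo (hsub ht)
  have hαx : Tendsto (fun n => α n x) atTop (𝓝 x) := hαid.tendsto_at hx_mem
  have hαy : Tendsto (fun n => α n y) atTop (𝓝 y) := hαid.tendsto_at hy_mem
  have hcn₀ := hucc.tendsto_at h0_mem
  have hcnᵣ := hucc.tendsto_at hr_mem
  have hleft := hnear₀ _ _ _ _ (fun n => (hcn n).mapsTo h0_mem) (fun n => (hα n).mapsTo hx_mem)
    hcn₀ hαx ⟨sub_lt_self _ hδ₀, lt_add_of_pos_right _ hδ₀⟩ ⟨by linarith, hxδ⟩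
  have hright := hnearᵣ _ _ _ _ (fun n => (hα n).mapsTo hy_mem) (fun n => (hcn n).mapsTo hr_mem)
    hαy hcnᵣ ⟨hyδ, by linarith⟩ ⟨sub_lt_self _ hδᵣ, lt_add_of_pos_right _ hδᵣ⟩
  have hclose := hc.eventually_abs_sub_lt_of_image_eq hsub (hcab.mapsTo.mono_right hxyT)
    hucc hαc hε
  filter_upwards [hcn₀.eventually_lt hαx hx, hαy.eventually_lt hcnᵣ hy, hclose, hleft, hright,
    Metric.tendstoUniformlyOn_iff.1 hfαc ε hε] with n hxn hyn hclose hleft hright hmid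
  exact (hcn n).exists_incrHomeoOn_abs_sub_lt (((hα n).mono hx_mem.1 hy_mem.2).comp hcab)
    ha hab hbr hxn hyn hclose (fun t ht => hleft _ (hca ht))
    (fun t ht => (dist_comm _ _).trans_lt (hmid t ht)) (fun t ht => hright _ (hcb ht))

theorem stmt4_general (hr : 0 ≤ r) (hconv : SkorConv fn f T)
    (hf₀ : ContinuousWithinAt f (Icc 0 T) (c 0)) (hfr : ContinuousWithinAt f (Icc 0 T) (c r))
    (hc : IsTimeChange c r T) (hcn : ∀ n, IsTimeChange (cn n) r T)
    (hucc : TendstoUniformlyOn cn c atTop (Icc 0 r)) :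
    SkorConv (fun n t => fn n (cn n t)) (fun t => f (c t)) r := by
  have h0_mem : (0 : ℝ) ∈ Icc 0 r := left_mem_Icc.2 hr
  have hr_mem : r ∈ Icc 0 r := right_mem_Icc.2 hr
  rcases (hc.monotoneOn h0_mem hr_mem hr).eq_or_lt with heq | hlt
  · have hconst : EqOn c (fun _ => c r) (Icc 0 r) := fun t ht =>
      (hc.monotoneOn ht hr_mem ht.2).antisymm
        (heq.symm.trans_le (hc.monotoneOn h0_mem ht ht.1))
    exact skorConv_comp_of_eqOn_const hconv (hc.mapsTo hr_mem) hfr hconst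
      (fun n => (hcn n).mapsTo) hucc
  · exact skorConv_comp_of_image_lt hr hconv hf₀ hfr hc hcn hucc hlt

end Composition

/-- composition lemma.  If the càdlàg nonnegative functions `f n`
(with nonnegative jumps, vanishing on `[1,∞)`) converge to `f` in the Skorohod sense
on `[0,1]`, and the continuous nondecreasing time changes `c n : [0,∞) → [0,1]`
(vanishing on `[0,λ n]`, equal to `1` on `[μ n,∞)` and strictly increasing in between,
and similarly for `c`) converge to `c` uniformly on compacts, then
`f n ∘ c n → f ∘ c` in the Skorohod sense on `[0,r]` for every `r > 0` which
is a continuity point of `f ∘ c`. -/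
theorem stmt4
    (f : ℝ → ℝ) (fn : ℕ → ℝ → ℝ)
    -- f, fn : [0,∞) → [0,∞) càdlàg with nonnegative jumps, vanishing on [1,∞)
    (hf_nonneg : ∀ t ≥ (0:ℝ), 0 ≤ f t)
    (hfn_nonneg : ∀ n, ∀ t ≥ (0:ℝ), 0 ≤ fn n t)
    (hf_rc : ∀ t ≥ (0:ℝ), ContinuousWithinAt f (Set.Ici t) t)
    (hfn_rc : ∀ n, ∀ t ≥ (0:ℝ), ContinuousWithinAt (fn n) (Set.Ici t) t)
    (hf_ll : ∀ t > (0:ℝ), ∃ L, Tendsto f (𝓝[<] t) (𝓝 L) ∧ L ≤ f t)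
    (hfn_ll : ∀ n, ∀ t > (0:ℝ), ∃ L, Tendsto (fn n) (𝓝[<] t) (𝓝 L) ∧ L ≤ fn n t)
    (hf_zero : ∀ t ≥ (1:ℝ), f t = 0)
    (hfn_zero : ∀ n, ∀ t ≥ (1:ℝ), fn n t = 0)
    -- Skorohod convergence of fn to f on [0,1]
    (hfconv : SkorConv fn f 1)
    -- the time changes
    (c : ℝ → ℝ) (cn : ℕ → ℝ → ℝ)
    (hc_cont : ContinuousOn c (Set.Ici 0)) (hcn_cont : ∀ n, ContinuousOn (cn n) (Set.Ici 0))
    (hc_mono : MonotoneOn c (Set.Ici 0)) (hcn_mono : ∀ n, MonotoneOn (cn n) (Set.Ici 0))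
    (hc_range : ∀ t ≥ (0:ℝ), c t ∈ Set.Icc (0:ℝ) 1)
    (hcn_range : ∀ n, ∀ t ≥ (0:ℝ), cn n t ∈ Set.Icc (0:ℝ) 1)
    (lam mu : ℝ) (lamn mun : ℕ → ℝ)
    (hlam : 0 ≤ lam) (hlamn : ∀ n, 0 ≤ lamn n)
    (hmu : lam < mu) (hmun : ∀ n, lamn n < mun n)
    -- (1) zero at the start
    (hczero : ∀ t ∈ Set.Icc (0:ℝ) lam, c t = 0)
    (hcnzero : ∀ n, ∀ t ∈ Set.Icc (0:ℝ) (lamn n), cn n t = 0)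
    -- (2) one at the end
    (hcone : ∀ t ≥ mu, c t = 1)
    (hcnone : ∀ n, ∀ t ≥ mun n, cn n t = 1)
    -- (3) strictly increasing in between
    (hcstrict : StrictMonoOn c (Set.Icc lam mu))
    (hcnstrict : ∀ n, StrictMonoOn (cn n) (Set.Icc (lamn n) (mun n)))
    -- uniform convergence on compacts
    (hucc : ∀ r : ℝ, TendstoUniformlyOn (fun n => cn n) c atTop (Set.Icc 0 r)) :
    ∀ r > (0:ℝ), ContinuousAt (fun t => f (c t)) r →
      SkorConv (fun n t => fn n (cn n t)) (fun t => f (c t)) r := by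
  intro r hr hfc
  have hc : IsTimeChange c r 1 :=
    .of_strictMonoOn_Icc hc_cont hc_mono hc_range hczero hcone hcstrict r
  have hf₀ : ContinuousWithinAt f (Icc 0 1) (c 0) := by
    rw [hczero 0 ⟨le_rfl, hlam⟩]
    exact (hf_rc 0 le_rfl).mono Icc_subset_Ici_self
  have hf₁ : ContinuousWithinAt f (Iio 1) 1 := continuousWithinAt_Iio_of_nonneg_of_eq_zero
    one_pos hf_nonneg (hf_zero 1 le_rfl) (hf_ll 1 one_pos)
  have hfr : ContinuousWithinAt f (Icc 0 1) (c r) := hc.continuousWithinAt_of_comp hr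
    (fun t ht => hf_rc t ht.1) (fun t ht => (hf_ll t ht.1).imp fun _ h => h.1) hf₁
    hfc.continuousWithinAt
  exact stmt4_general hr.le hfconv hf₀ hfr hc (fun n => .of_strictMonoOn_Icc (hcn_cont n)
    (hcn_mono n) (hcn_range n) (hcnzero n) (hcnone n) (hcnstrict n) r) (hucc r)
end
end

section
/- Fix n and x = (x_1,…,x_n) ∈ ℝⁿ, and for k ∈ {0,…,n} let B_k be the set of paths in 𝒫 = {x^σ : σ a permutation of [n]} having exactly k complete excursions below their running maximum. For any permutation σ of [k], the map φ_σ : B_k → B_k, which rearranges the k increment blocks of a path over its excursion intervals in the order σ(1),…,σ(k) (leaving the increments after the last element of 𝒵 in place), is a bijection of B_k, with inverse φ_{σ^{-1}}. -/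
open Set Filter Classical

noncomputable section

/-- The path `x^σ`: `w_0 = 0`, `w_j = Σ_{i ≤ j} x_{σ(i)}`. -/
def pathOf (n : ℕ) (x : Fin n → ℝ) (σ : Equiv.Perm (Fin n)) : ℕ → ℝ :=
  fun j => ∑ i ∈ Finset.univ.filter (fun i : Fin n => (i : ℕ) < j), x (σ i)

/-- The set `𝒵 = {j ∈ {0,…,n} : w_j = max_{i ≤ j} w_i}` of times at which the path
is at its running maximum. -/
def ladderSet (n : ℕ) (w : ℕ → ℝ) : Finset ℕ :=
  (Finset.range (n + 1)).filter (fun j => ∀ i ∈ Finset.range (j + 1), w i ≤ w j)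

/-- The number `K` of complete excursions below the maximum:
`𝒵 = {I_0 < I_1 < ⋯ < I_K}` has `K + 1` elements. -/
def numExc (n : ℕ) (w : ℕ → ℝ) : ℕ := (ladderSet n w).card - 1

/-- `I_m`, the `m`-th element of `𝒵` in increasing order (junk value `0` if out of range). -/
def ladderIdx (n : ℕ) (w : ℕ → ℝ) (m : ℕ) : ℕ :=
  ((ladderSet n w).sort (· ≤ ·)).getD m 0

/-- Length of the block placed in `r`-th position (0-based) after rearranging the `k`
excursion blocks by `σ`: the `r`-th new block is the old block `σ(r)`, which covers
positions `I_{σ(r)} + 1, …, I_{σ(r)+1}`. -/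
def blockLen (n : ℕ) (w : ℕ → ℝ) (k : ℕ) (σ : Equiv.Perm (Fin k)) (r : ℕ) : ℕ :=
  if h : r < k then
    ladderIdx n w (((σ ⟨r, h⟩ : Fin k) : ℕ) + 1) - ladderIdx n w ((σ ⟨r, h⟩ : Fin k) : ℕ)
  else 0

/-- `J_m`, the right endpoint of the `m`-th new block. -/
def newEnd (n : ℕ) (w : ℕ → ℝ) (k : ℕ) (σ : Equiv.Perm (Fin k)) (m : ℕ) : ℕ :=
  ∑ r ∈ Finset.range m, blockLen n w k σ r

/-- Position in the original path from which the increment at position `p` of the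
rearranged path is taken: positions in the `m`-th new block `(J_m, J_{m+1}]` are read
from the old block `σ(m)`, i.e. from `(I_{σ(m)}, I_{σ(m)+1}]`; increments after the
last ladder time are left in place. -/
def excSource (n : ℕ) (w : ℕ → ℝ) (k : ℕ) (σ : Equiv.Perm (Fin k)) (p : ℕ) : ℕ :=
  if 1 ≤ p ∧ p ≤ newEnd n w k σ k then
    let m := sInf {m : ℕ | p ≤ newEnd n w k σ (m + 1)}
    if h : m < k then ladderIdx n w ((σ ⟨m, h⟩ : Fin k) : ℕ) + (p - newEnd n w k σ m)
    else p
  else p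

/-- `φ_σ(w)`: the path whose increments are those of `w`, with the `k` complete
excursion blocks below the maximum rearranged in the order `σ(0), …, σ(k−1)` and the
increments after the last ladder time left in place. -/
def permuteExc (n : ℕ) (k : ℕ) (σ : Equiv.Perm (Fin k)) (w : ℕ → ℝ) : ℕ → ℝ :=
  fun j => ∑ p ∈ Finset.Icc 1 j,
    (w (excSource n w k σ p) - w (excSource n w k σ p - 1))

/-- `B_k`: the set of paths in `𝒫 = {x^σ}` having exactly `k` complete excursions
below their running maximum. -/
def exbSet (n : ℕ) (x : Fin n → ℝ) (k : ℕ) : Set (ℕ → ℝ) :=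
  {w | (∃ σ : Equiv.Perm (Fin n), w = pathOf n x σ) ∧ numExc n w = k}

/-!
The increments of `φ_σ(w)` are those of `w` read through `excSource`. Over an excursion interval
`w` stays strictly below its starting value until it returns to it or jumps above it; this only
depends on the increments inside the block, so it survives moving the block. Hence the ladder times
of `φ_σ(w)` are exactly the endpoints `J_0 < ⋯ < J_k` of the rearranged blocks. In particular the
`r`-th excursion of `φ_σ(w)` is the `σ(r)`-th excursion of `w`, which gives the composition rule
`φ_τ ∘ φ_σ = φ_{σ τ}` on paths with `k` excursions. With `φ_1 = id` this yields the inverse, and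
on source positions it shows that the increments are permuted, so that `φ_σ` preserves `𝒫`.
-/

section LadderTimes

variable {n k : ℕ} {w : ℕ → ℝ}

theorem mem_ladderSet {j : ℕ} : j ∈ ladderSet n w ↔ j ≤ n ∧ ∀ i ≤ j, w i ≤ w j := by
  simp [ladderSet]

theorem zero_mem_ladderSet : 0 ∈ ladderSet n w := by
  simp [mem_ladderSet]

theorem card_ladderSet : (ladderSet n w).card = numExc n w + 1 :=
  (Nat.sub_add_cancel (Finset.card_pos.2 ⟨0, zero_mem_ladderSet⟩)).symm

theorem exists_mem_ladderSet_of_le {a i : ℕ} (ha : a ∈ ladderSet n w) (hai : a < i) (hi : i ≤ n)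
    (hw : w a ≤ w i) : ∃ j ∈ Ioc a i, j ∈ ladderSet n w := by
  obtain ⟨j, hj, hmax⟩ := (Finset.Ioc a i).exists_max_image w ⟨i, Finset.mem_Ioc.2 ⟨hai, le_rfl⟩⟩
  rw [Finset.mem_Ioc] at hj
  refine ⟨j, hj, mem_ladderSet.2 ⟨hj.2.trans hi, fun l hl => ?_⟩⟩
  rcases le_or_gt l a with hla | hal
  · exact ((mem_ladderSet.1 ha).2 l hla).trans
      (hw.trans (hmax i (Finset.mem_Ioc.2 ⟨hai, le_rfl⟩)))
  · exact hmax l (Finset.mem_Ioc.2 ⟨hal, hl.trans hj.2⟩)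

theorem ladderIdx_eq_nth (m : ℕ) : ladderIdx n w m = Nat.nth (· ∈ ladderSet n w) m := by
  have h := Nat.nth_eq_getD_sort (p := (· ∈ ladderSet n w)) (ladderSet n w).finite_toSet m
  rw [Finset.finite_toSet_toFinset] at h
  exact h.symm

theorem ladderIdx_zero : ladderIdx n w 0 = 0 := by
  rw [ladderIdx_eq_nth, Nat.nth_zero_of_zero zero_mem_ladderSet]

theorem ladderIdx_strictMonoOn : StrictMonoOn (ladderIdx n w) (Iic (numExc n w)) := by
  have h := Nat.nth_strictMonoOn (p := (· ∈ ladderSet n w)) (ladderSet n w).finite_toSet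
  rw [Finset.finite_toSet_toFinset, card_ladderSet] at h
  intro a ha b hb hab
  simp only [ladderIdx_eq_nth]
  exact h (Nat.lt_succ_of_le ha) (Nat.lt_succ_of_le hb) hab

theorem image_ladderIdx_Iic : ladderIdx n w '' Iic (numExc n w) = ladderSet n w := by
  have h := Nat.image_nth_Iio_card (p := (· ∈ ladderSet n w)) (ladderSet n w).finite_toSet
  rw [Finset.finite_toSet_toFinset, card_ladderSet] at h
  rw [funext ladderIdx_eq_nth, ← Set.Iio_add_one_eq_Iic]
  exact h

theorem ladderIdx_mem {m : ℕ} (hm : m ≤ numExc n w) : ladderIdx n w m ∈ ladderSet n w :=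
  Finset.mem_coe.1 (image_ladderIdx_Iic ▸ mem_image_of_mem _ hm)

theorem ladderIdx_le (m : ℕ) : ladderIdx n w m ≤ n := by
  by_cases h : ladderIdx n w m = 0
  · exact h ▸ Nat.zero_le n
  · rw [ladderIdx_eq_nth] at h ⊢
    exact (mem_ladderSet.1 (Nat.nth_mem_of_ne_zero h)).1

/-- `f 0 < ⋯ < f k` cut the path `w` on `{0,…,n}` into `k` complete excursions below the maximum,
over the intervals `[f m, f (m + 1))`, followed by an incomplete one after time `f k`. The
conditions are local to each block, which is what makes them stable under rearranging blocks;
values of `f` beyond `k` are irrelevant. -/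
structure IsExcursionDecomp (n : ℕ) (w : ℕ → ℝ) (k : ℕ) (f : ℕ → ℕ) : Prop where
  zero : f 0 = 0
  lt_succ : ∀ m < k, f m < f (m + 1)
  last_le : f k ≤ n
  le_succ : ∀ m < k, w (f m) ≤ w (f (m + 1))
  lt_of_mem_Ioo : ∀ m < k, ∀ i ∈ Ioo (f m) (f (m + 1)), w i < w (f m)
  lt_of_mem_Ioc : ∀ i ∈ Ioc (f k) n, w i < w (f k)

namespace IsExcursionDecomp

variable {f : ℕ → ℕ}

theorem strictMonoOn (h : IsExcursionDecomp n w k f) : StrictMonoOn f (Iic k) :=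
  strictMonoOn_Iic_of_lt_succ h.lt_succ

theorem le_of_le (h : IsExcursionDecomp n w k f) {m i : ℕ} (hm : m ≤ k) (hi : i ≤ f m) :
    w i ≤ w (f m) := by
  induction m with
  | zero => rw [h.zero, Nat.le_zero] at hi; rw [hi, h.zero]
  | succ m ih =>
    rcases le_or_gt i (f m) with him | hmi
    · exact (ih (by omega) him).trans (h.le_succ m hm)
    · rcases hi.eq_or_lt with rfl | hi
      · exact le_rfl
      · exact (h.lt_of_mem_Ioo m hm i ⟨hmi, hi⟩).le.trans (h.le_succ m hm)

theorem mem_ladderSet (h : IsExcursionDecomp n w k f) {m : ℕ} (hm : m ≤ k) :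
    f m ∈ ladderSet n w :=
  _root_.mem_ladderSet.2
    ⟨(h.strictMonoOn.monotoneOn hm self_mem_Iic hm).trans h.last_le, fun _ => h.le_of_le hm⟩

theorem exists_eq_of_mem_ladderSet (h : IsExcursionDecomp n w k f) {j m : ℕ}
    (hj : j ∈ ladderSet n w) (hm : m ≤ k) (hjm : j ≤ f m) : ∃ r ≤ m, f r = j := by
  induction m with
  | zero => exact ⟨0, le_rfl, by have := h.zero; omega⟩
  | succ m ih =>
    rcases le_or_gt j (f m) with hjm' | hmj
    · obtain ⟨r, hr, rfl⟩ := ih (by omega) hjm'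
      exact ⟨r, by omega, rfl⟩
    · refine ⟨m + 1, le_rfl, hjm.antisymm' (not_lt.1 fun hlt => ?_)⟩
      exact ((_root_.mem_ladderSet.1 hj).2 _ hmj.le).not_gt (h.lt_of_mem_Ioo m hm j ⟨hmj, hlt⟩)

theorem image_Iic (h : IsExcursionDecomp n w k f) : f '' Iic k = ladderSet n w := by
  refine Subset.antisymm (image_subset_iff.2 fun m hm => h.mem_ladderSet hm) fun j hj => ?_
  have hjk : j ≤ f k := not_lt.1 fun hlt =>
    ((_root_.mem_ladderSet.1 hj).2 _ hlt.le).not_gt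
      (h.lt_of_mem_Ioc j ⟨hlt, (_root_.mem_ladderSet.1 hj).1⟩)
  exact h.exists_eq_of_mem_ladderSet hj le_rfl hjk

theorem numExc_eq (h : IsExcursionDecomp n w k f) : numExc n w = k := by
  have hcard : (f '' Iic k).ncard = k + 1 := by
    rw [h.strictMonoOn.injOn.ncard_image, ← Finset.coe_Iic, ncard_coe_finset, Nat.card_Iic]
  rw [h.image_Iic, ncard_coe_finset, card_ladderSet] at hcard
  exact Nat.succ_injective hcard

theorem ladderIdx_eq (h : IsExcursionDecomp n w k f) {m : ℕ} (hm : m ≤ k) :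
    ladderIdx n w m = f m := by
  have hrange : range ((Iic k).domRestrict (ladderIdx n w)) = range ((Iic k).domRestrict f) := by
    rw [range_domRestrict, range_domRestrict, h.image_Iic, ← h.numExc_eq, image_ladderIdx_Iic]
  have hmono : StrictMonoOn (ladderIdx n w) (Iic k) := h.numExc_eq ▸ ladderIdx_strictMonoOn
  exact congrFun ((hmono.domRestrict.range_inj h.strictMonoOn.domRestrict).1 hrange) ⟨m, hm⟩

end IsExcursionDecomp

theorem isExcursionDecomp_ladderIdx (hw : numExc n w = k) :
    IsExcursionDecomp n w k (ladderIdx n w) := by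
  subst hw
  have hmono := ladderIdx_strictMonoOn (n := n) (w := w)
  have below : ∀ m ≤ numExc n w, ∀ i, ladderIdx n w m < i → i ≤ n →
      (∀ r ≤ numExc n w, m < r → i < ladderIdx n w r) → w i < w (ladderIdx n w m) := by
    intro m hm i hmi hin hnext
    by_contra! hle
    obtain ⟨j, ⟨hmj, hji⟩, hj⟩ := exists_mem_ladderSet_of_le (ladderIdx_mem hm) hmi hin hle
    rw [← Finset.mem_coe, ← image_ladderIdx_Iic] at hj
    obtain ⟨r, hr, rfl⟩ := hj
    exact (hnext r hr ((hmono.lt_iff_lt hm hr).1 hmj)).not_ge hji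
  exact
    { zero := ladderIdx_zero
      lt_succ := fun m hm => hmono hm.le hm (Nat.lt_succ_self m)
      last_le := ladderIdx_le _
      le_succ := fun m hm => (mem_ladderSet.1 (ladderIdx_mem hm)).2 _
        (hmono hm.le hm (Nat.lt_succ_self m)).le
      lt_of_mem_Ioo := fun m hm i hi => below m hm.le i hi.1 (hi.2.le.trans (ladderIdx_le _))
        fun r hr hmr => hi.2.trans_le (hmono.monotoneOn hm hr hmr)
      lt_of_mem_Ioc := fun i hi => below _ le_rfl i hi.1 hi.2
        fun r hr hmr => absurd hmr hr.not_gt }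

end LadderTimes

section Blocks

variable {n k : ℕ} {w : ℕ → ℝ} (σ : Equiv.Perm (Fin k))

theorem blockLen_coe (m : Fin k) :
    blockLen n w k σ m = ladderIdx n w (σ m + 1) - ladderIdx n w (σ m) := by
  simp [blockLen]

theorem newEnd_zero : newEnd n w k σ 0 = 0 :=
  Finset.sum_range_zero _

theorem newEnd_succ (m : ℕ) : newEnd n w k σ (m + 1) = newEnd n w k σ m + blockLen n w k σ m :=
  Finset.sum_range_succ _ m

theorem newEnd_mono : Monotone (newEnd n w k σ) :=
  monotone_nat_of_le_succ fun m => (newEnd_succ σ m).symm ▸ Nat.le_add_right _ _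

theorem newEnd_one {m : ℕ} (hmk : m ≤ k) (hm : m ≤ numExc n w) :
    newEnd n w k 1 m = ladderIdx n w m := by
  induction m with
  | zero => rw [newEnd_zero, ladderIdx_zero]
  | succ m ih =>
    have hlt := ladderIdx_strictMonoOn (Nat.le_of_succ_le hm) hm (Nat.lt_succ_self m)
    have hlen := blockLen_coe (n := n) (w := w) 1 ⟨m, hmk⟩
    rw [newEnd_succ, ih (by omega) (by omega), hlen]
    exact Nat.add_sub_cancel' hlt.le

theorem newEnd_self (hk : k ≤ numExc n w) : newEnd n w k σ k = ladderIdx n w k := by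
  rw [← newEnd_one le_rfl hk, newEnd, newEnd, Finset.sum_range, Finset.sum_range]
  simp only [blockLen_coe]
  exact Equiv.sum_comp σ fun i : Fin k => ladderIdx n w (i + 1) - ladderIdx n w i

theorem eq_zero_or_newEnd_lt_or_exists_block (p : ℕ) :
    p = 0 ∨ newEnd n w k σ k < p ∨
      ∃ m : Fin k, ∃ t, 0 < t ∧ t ≤ blockLen n w k σ m ∧ p = newEnd n w k σ m + t := by
  refine or_iff_not_imp_left.2 fun hp0 => or_iff_not_imp_left.2 fun hpk => ?_
  have hp : p ∈ ⋃ m ∈ Ico 0 k, Ioc (newEnd n w k σ m) (newEnd n w k σ (m + 1)) := by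
    have h := (newEnd_mono (n := n) (w := w) σ).biUnion_Ico_Ioc_map_succ 0 k
    simp only [Order.succ_eq_add_one] at h
    rw [h, newEnd_zero]
    exact ⟨Nat.pos_of_ne_zero hp0, not_lt.1 hpk⟩
  simp only [mem_iUnion] at hp
  obtain ⟨m, hm, hlt, hle⟩ := hp
  rw [newEnd_succ] at hle
  exact ⟨⟨m, hm.2⟩, p - newEnd n w k σ m, Nat.sub_pos_of_lt hlt, Nat.sub_le_iff_le_add'.2 hle,
    (Nat.add_sub_cancel' hlt.le).symm⟩

theorem excSource_zero : excSource n w k σ 0 = 0 :=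
  if_neg (by omega)

theorem excSource_of_newEnd_lt {p : ℕ} (hp : newEnd n w k σ k < p) : excSource n w k σ p = p :=
  if_neg (by omega)

theorem excSource_newEnd_add (m : Fin k) {t : ℕ} (ht0 : 0 < t) (ht : t ≤ blockLen n w k σ m) :
    excSource n w k σ (newEnd n w k σ m + t) = ladderIdx n w (σ m) + t := by
  have hle : newEnd n w k σ m + t ≤ newEnd n w k σ (m + 1) := by
    rw [newEnd_succ]; exact Nat.add_le_add_left ht _
  have hblock : sInf {r : ℕ | newEnd n w k σ m + t ≤ newEnd n w k σ (r + 1)} = m := by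
    refine IsLeast.csInf_eq ⟨hle, fun r hr => not_lt.1 fun hlt => ?_⟩
    rw [mem_ofPred_eq] at hr
    have : newEnd n w k σ (r + 1) ≤ newEnd n w k σ m := newEnd_mono σ hlt
    omega
  have hk : newEnd n w k σ (m + 1) ≤ newEnd n w k σ k := newEnd_mono σ m.isLt
  rw [excSource, if_pos ⟨by omega, hle.trans hk⟩]
  simp only [hblock, m.isLt, dif_pos, Nat.add_sub_cancel_left]

theorem excSource_mem_Icc {p : ℕ} (hp : p ∈ Icc 1 n) : excSource n w k σ p ∈ Icc 1 n := by
  rcases eq_zero_or_newEnd_lt_or_exists_block (n := n) (w := w) σ p with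
    rfl | hpk | ⟨m, t, ht0, ht, rfl⟩
  · rwa [excSource_zero]
  · rwa [excSource_of_newEnd_lt σ hpk]
  · rw [excSource_newEnd_add σ m ht0 ht]
    rw [blockLen_coe] at ht
    have := ladderIdx_le (n := n) (w := w) (σ m + 1)
    exact ⟨by omega, by omega⟩

theorem excSource_one (hk : k ≤ numExc n w) (p : ℕ) : excSource n w k 1 p = p := by
  rcases eq_zero_or_newEnd_lt_or_exists_block (n := n) (w := w) (1 : Equiv.Perm (Fin k)) p with
    rfl | hpk | ⟨m, t, ht0, ht, rfl⟩
  · exact excSource_zero 1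
  · exact excSource_of_newEnd_lt 1 hpk
  · rw [excSource_newEnd_add 1 m ht0 ht, newEnd_one m.isLt.le (m.isLt.le.trans hk)]
    rfl

end Blocks

section Rearrangement

variable {n k : ℕ} {w : ℕ → ℝ} (σ τ : Equiv.Perm (Fin k))

theorem permuteExc_eq_sum_range (j : ℕ) :
    permuteExc n k σ w j = ∑ i ∈ Finset.range j,
      (w (excSource n w k σ (i + 1)) - w (excSource n w k σ (i + 1) - 1)) := by
  rw [permuteExc, Finset.range_eq_Ico, Finset.sum_Ico_add'
    (fun p => w (excSource n w k σ p) - w (excSource n w k σ p - 1)) 0 j 1]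
  rfl

theorem permuteExc_sub_pred (p : ℕ) :
    permuteExc n k σ w p - permuteExc n k σ w (p - 1) =
      w (excSource n w k σ p) - w (excSource n w k σ p - 1) := by
  cases p with
  | zero => simp [excSource_zero]
  | succ p =>
    simp only [permuteExc_eq_sum_range, Nat.add_sub_cancel, Finset.sum_range_succ_sub_sum]

theorem permuteExc_add_sub_of_excSource {a b t : ℕ}
    (h : ∀ s < t, excSource n w k σ (a + s + 1) = b + s + 1) :
    permuteExc n k σ w (a + t) - permuteExc n k σ w a = w (b + t) - w b := by
  rw [permuteExc_eq_sum_range, permuteExc_eq_sum_range, Finset.sum_range_add, add_sub_cancel_left,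
    ← add_zero b, add_assoc, zero_add, ← Finset.sum_range_sub (fun s => w (b + s)) t]
  refine Finset.sum_congr rfl fun s hs => ?_
  rw [h s (Finset.mem_range.1 hs)]
  rfl

theorem permuteExc_newEnd_add_sub (m : Fin k) {t : ℕ} (ht : t ≤ blockLen n w k σ m) :
    permuteExc n k σ w (newEnd n w k σ m + t) - permuteExc n k σ w (newEnd n w k σ m) =
      w (ladderIdx n w (σ m) + t) - w (ladderIdx n w (σ m)) :=
  permuteExc_add_sub_of_excSource σ fun s hs =>
    excSource_newEnd_add σ m (Nat.succ_pos s) (Nat.le_trans hs ht)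

theorem permuteExc_newEnd_self_add_sub (t : ℕ) :
    permuteExc n k σ w (newEnd n w k σ k + t) - permuteExc n k σ w (newEnd n w k σ k) =
      w (newEnd n w k σ k + t) - w (newEnd n w k σ k) :=
  permuteExc_add_sub_of_excSource σ fun _ _ => excSource_of_newEnd_lt σ (by omega)

theorem isExcursionDecomp_newEnd (hw : numExc n w = k) :
    IsExcursionDecomp n (permuteExc n k σ w) k (newEnd n w k σ) := by
  have h := isExcursionDecomp_ladderIdx hw
  have hlast := newEnd_self σ hw.ge
  have hlen (m : Fin k) :
      ladderIdx n w (σ m) + blockLen n w k σ m = ladderIdx n w (σ m + 1) := by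
    rw [blockLen_coe, Nat.add_sub_cancel' (h.lt_succ _ (σ m).isLt).le]
  refine ⟨newEnd_zero σ, fun m hm => ?_, hlast ▸ h.last_le, fun m hm => ?_,
    fun m hm i hi => ?_, fun i hi => ?_⟩
  · lift m to Fin k using hm
    have hlt := h.lt_succ _ (σ m).isLt
    have hsum := hlen m
    rw [newEnd_succ]
    omega
  · lift m to Fin k using hm
    have hblock := permuteExc_newEnd_add_sub (n := n) (w := w) σ m le_rfl
    rw [hlen, ← newEnd_succ] at hblock
    linarith [h.le_succ _ (σ m).isLt]
  · lift m to Fin k using hm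
    obtain ⟨t, rfl⟩ := Nat.exists_eq_add_of_lt hi.1
    have ht : t + 1 < blockLen n w k σ m := by
      have hend := hi.2
      rw [newEnd_succ] at hend
      omega
    have hbelow := h.lt_of_mem_Ioo _ (σ m).isLt (ladderIdx n w (σ m) + (t + 1))
      ⟨by omega, by rw [← hlen]; omega⟩
    have hblock := permuteExc_newEnd_add_sub (n := n) (w := w) σ m ht.le
    rw [add_assoc]
    linarith
  · obtain ⟨t, rfl⟩ := Nat.exists_eq_add_of_lt hi.1
    have hbelow := h.lt_of_mem_Ioc _ (hlast ▸ hi)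
    have htail := permuteExc_newEnd_self_add_sub (n := n) (w := w) σ (t + 1)
    rw [← hlast] at hbelow
    rw [add_assoc] at hbelow ⊢
    linarith

theorem numExc_permuteExc (hw : numExc n w = k) : numExc n (permuteExc n k σ w) = k :=
  (isExcursionDecomp_newEnd σ hw).numExc_eq

theorem ladderIdx_permuteExc (hw : numExc n w = k) {m : ℕ} (hm : m ≤ k) :
    ladderIdx n (permuteExc n k σ w) m = newEnd n w k σ m :=
  (isExcursionDecomp_newEnd σ hw).ladderIdx_eq hm

theorem blockLen_permuteExc (hw : numExc n w = k) (m : Fin k) :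
    blockLen n (permuteExc n k σ w) k τ m = blockLen n w k (σ * τ) m := by
  rw [blockLen_coe, ladderIdx_permuteExc σ hw (τ m).isLt, ladderIdx_permuteExc σ hw (τ m).isLt.le,
    newEnd_succ, Nat.add_sub_cancel_left, blockLen_coe, blockLen_coe, Equiv.Perm.mul_apply]

theorem newEnd_permuteExc (hw : numExc n w = k) {m : ℕ} (hm : m ≤ k) :
    newEnd n (permuteExc n k σ w) k τ m = newEnd n w k (σ * τ) m :=
  Finset.sum_congr rfl fun r hr =>
    blockLen_permuteExc σ τ hw ⟨r, (Finset.mem_range.1 hr).trans_le hm⟩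

theorem excSource_excSource (hw : numExc n w = k) (p : ℕ) :
    excSource n w k σ (excSource n (permuteExc n k σ w) k τ p) = excSource n w k (σ * τ) p := by
  rcases eq_zero_or_newEnd_lt_or_exists_block (n := n) (w := w) (σ * τ) p with
    rfl | hpk | ⟨m, t, ht0, ht, rfl⟩
  · simp only [excSource_zero]
  · have hpτ : newEnd n (permuteExc n k σ w) k τ k < p := by rwa [newEnd_permuteExc σ τ hw le_rfl]
    have hpσ : newEnd n w k σ k < p := by
      rwa [newEnd_self σ hw.ge, ← newEnd_self (σ * τ) hw.ge]
    rw [excSource_of_newEnd_lt τ hpτ, excSource_of_newEnd_lt σ hpσ, excSource_of_newEnd_lt _ hpk]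
  · have htτ : t ≤ blockLen n (permuteExc n k σ w) k τ m := by rwa [blockLen_permuteExc σ τ hw]
    have htσ : t ≤ blockLen n w k σ (τ m) := by
      rwa [blockLen_coe, ← Equiv.Perm.mul_apply, ← blockLen_coe]
    rw [excSource_newEnd_add _ m ht0 ht, ← newEnd_permuteExc σ τ hw m.isLt.le,
      excSource_newEnd_add τ m ht0 htτ, ladderIdx_permuteExc σ hw (τ m).isLt.le,
      excSource_newEnd_add σ (τ m) ht0 htσ, Equiv.Perm.mul_apply]

theorem permuteExc_permuteExc (hw : numExc n w = k) :
    permuteExc n k τ (permuteExc n k σ w) = permuteExc n k (σ * τ) w :=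
  funext fun j => Finset.sum_congr rfl fun p _ => by
    rw [permuteExc_sub_pred, excSource_excSource σ τ hw]

theorem permuteExc_one (hk : k ≤ numExc n w) (h0 : w 0 = 0) : permuteExc n k 1 w = w := by
  funext j
  simp only [permuteExc_eq_sum_range, excSource_one hk, Nat.add_sub_cancel, Finset.sum_range_sub,
    h0, sub_zero]

theorem permuteExc_inv_permuteExc (hw : numExc n w = k) (h0 : w 0 = 0) :
    permuteExc n k σ⁻¹ (permuteExc n k σ w) = w := by
  rw [permuteExc_permuteExc σ σ⁻¹ hw, mul_inv_cancel, permuteExc_one hw.ge h0]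

theorem exists_perm_excSource_succ (hw : numExc n w = k) :
    ∃ e : Equiv.Perm (Fin n), ∀ i : Fin n, excSource n w k σ (i + 1) = e i + 1 := by
  have hmem (v : ℕ → ℝ) (ρ : Equiv.Perm (Fin k)) (i : Fin n) :
      excSource n v k ρ (i + 1) ∈ Icc 1 n :=
    excSource_mem_Icc ρ ⟨Nat.succ_pos i, i.isLt⟩
  have hex (v : ℕ → ℝ) (ρ : Equiv.Perm (Fin k)) (i : Fin n) :
      ∃ i' : Fin n, excSource n v k ρ (i + 1) = i' + 1 :=
    ⟨⟨excSource n v k ρ (i + 1) - 1, Nat.sub_one_lt_of_le (hmem v ρ i).1 (hmem v ρ i).2⟩,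
      (Nat.sub_add_cancel (hmem v ρ i).1).symm⟩
  choose g hg using hex w σ
  have hsurj : Function.Surjective g := by
    intro i
    obtain ⟨i', hi'⟩ := hex (permuteExc n k σ w) σ⁻¹ i
    have hcancel := excSource_excSource σ σ⁻¹ hw (i + 1)
    rw [mul_inv_cancel, excSource_one hw.ge, hi', hg] at hcancel
    exact ⟨i', Fin.ext (Nat.succ_injective hcancel)⟩
  exact ⟨Equiv.ofBijective g hsurj.bijective_of_finite, hg⟩

end Rearrangement

section Paths

variable {n k : ℕ} (x : Fin n → ℝ)

theorem pathOf_eq_sum_range (τ : Equiv.Perm (Fin n)) (j : ℕ) :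
    pathOf n x τ j = ∑ i ∈ Finset.range j, if h : i < n then x (τ ⟨i, h⟩) else 0 := by
  let g : ℕ → ℝ := fun i => if h : i < n then x (τ ⟨i, h⟩) else 0
  calc pathOf n x τ j
      = ∑ i ∈ (Finset.univ.filter fun i : Fin n => (i : ℕ) < j).map Fin.valEmbedding, g i := by
        rw [Finset.sum_map]
        exact Finset.sum_congr rfl fun i _ => (show g i = x (τ i) from dif_pos i.isLt).symm
    _ = ∑ i ∈ Finset.range j, g i := by
        refine Finset.sum_subset (fun i hi => ?_) fun i hij hi => dif_neg fun hin => hi ?_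
        · obtain ⟨i, hij, rfl⟩ := Finset.mem_map.1 hi
          exact Finset.mem_range.2 (Finset.mem_filter.1 hij).2
        · exact Finset.mem_map.2 ⟨⟨i, hin⟩, by simpa using hij, rfl⟩

theorem pathOf_zero (τ : Equiv.Perm (Fin n)) : pathOf n x τ 0 = 0 := by
  simp [pathOf]

theorem pathOf_succ_sub (τ : Equiv.Perm (Fin n)) (j : ℕ) :
    pathOf n x τ (j + 1) - pathOf n x τ j = if h : j < n then x (τ ⟨j, h⟩) else 0 := by
  simp only [pathOf_eq_sum_range, Finset.sum_range_succ_sub_sum]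

theorem exists_permuteExc_pathOf_eq (σ : Equiv.Perm (Fin k)) (τ : Equiv.Perm (Fin n))
    (hw : numExc n (pathOf n x τ) = k) :
    ∃ τ' : Equiv.Perm (Fin n), permuteExc n k σ (pathOf n x τ) = pathOf n x τ' := by
  obtain ⟨e, he⟩ := exists_perm_excSource_succ σ hw
  refine ⟨τ * e, funext fun j => ?_⟩
  rw [permuteExc_eq_sum_range, pathOf_eq_sum_range]
  refine Finset.sum_congr rfl fun i _ => ?_
  by_cases hi : i < n
  · rw [he ⟨i, hi⟩, Nat.add_sub_cancel, pathOf_succ_sub, dif_pos (e ⟨i, hi⟩).isLt, dif_pos hi]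
    rfl
  · have htail : newEnd n (pathOf n x τ) k σ k < i + 1 := by
      rw [newEnd_self σ hw.ge]
      exact (ladderIdx_le k).trans_lt (by omega)
    rw [excSource_of_newEnd_lt σ htail, Nat.add_sub_cancel, pathOf_succ_sub, dif_neg hi, dif_neg hi]

theorem mapsTo_permuteExc (σ : Equiv.Perm (Fin k)) :
    MapsTo (permuteExc n k σ) (exbSet n x k) (exbSet n x k) := by
  rintro _ ⟨⟨τ, rfl⟩, hw⟩
  exact ⟨exists_permuteExc_pathOf_eq x σ τ hw, numExc_permuteExc σ hw⟩

theorem leftInvOn_permuteExc (σ : Equiv.Perm (Fin k)) :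
    LeftInvOn (permuteExc n k σ⁻¹) (permuteExc n k σ) (exbSet n x k) := by
  rintro _ ⟨⟨τ, rfl⟩, hw⟩
  exact permuteExc_inv_permuteExc σ hw (pathOf_zero x τ)

end Paths

/-- for any permutation `σ` of `[k]`, the rearrangement map
`φ_σ : B_k → B_k` is a bijection of `B_k`, with inverse `φ_{σ⁻¹}`. -/
theorem stmt7 (n k : ℕ) (x : Fin n → ℝ) (σ : Equiv.Perm (Fin k)) :
    Set.BijOn (permuteExc n k σ) (exbSet n x k) (exbSet n x k) ∧
    Set.InvOn (permuteExc n k σ⁻¹) (permuteExc n k σ) (exbSet n x k) (exbSet n x k) := by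
  have hinv : InvOn (permuteExc n k σ⁻¹) (permuteExc n k σ) (exbSet n x k) (exbSet n x k) :=
    ⟨leftInvOn_permuteExc x σ, by simpa only [inv_inv] using leftInvOn_permuteExc x σ⁻¹⟩
  exact ⟨hinv.bijOn (mapsTo_permuteExc x σ) (mapsTo_permuteExc x σ⁻¹), hinv⟩
end
end

section
/- Fix a degree sequence s of size s, a natural number h ≥ 1, and u ∈ {2,…,s}. Define Φ_{h,u} : E_s → E_s as follows: given w ∈ E_s coding the tree τ_w, if the height of the vertex labeled u (in depth-first order) in τ_w is strictly greater than h, let v be the ancestor of u at distance h from u and let Φ_{h,u}(w) be the depth-first walk of the 213 transformation Ψ_{v,u}(τ_w); otherwise set Φ_{h,u}(w) = w. Then Φ_{h,u} is a bijection of E_s onto itself. -/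
open Set Filter

noncomputable section

/-- The walk associated with the increment list `l`: `w_j` is the sum of the first `j`
increments (so `w_0 = 0`). -/
def wlk (l : List ℤ) (j : ℕ) : ℤ := (l.take j).sum

/-- `l` is (the increment list of) an excursion with degree sequence `N` of size `s`:
`w_0 = 0`, `w_j ≥ 0` for `j < s`, `w_s = −1`, and exactly `N i` increments equal
`i − 1` for every `i ≥ 0`. -/
def IsExcursion (N : ℕ → ℕ) (s : ℕ) (l : List ℤ) : Prop :=
  l.length = s ∧ (∀ j < s, 0 ≤ wlk l j) ∧ wlk l s = -1 ∧
    ∀ i : ℕ, l.count ((i : ℤ) - 1) = N i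

/-- `d_v`: the size of the subtree rooted at the vertex `v` (in depth-first order),
i.e. the length of the excursion of the walk starting at `v`:
`d_v = inf{m ≥ 1 : w_{v−1+m} = w_{v−1} − 1}`. -/
def subLen (l : List ℤ) (v : ℕ) : ℕ :=
  sInf {m : ℕ | 1 ≤ m ∧ wlk l (v - 1 + m) = wlk l (v - 1) - 1}

/-- `i` is a strict ancestor of `j` in the tree coded by `l` (vertices are labeled
`1,…,s` in depth-first order): `i < j` and `j` lies in the subtree rooted at `i`. -/
def isAnc (l : List ℤ) (i j : ℕ) : Prop :=
  1 ≤ i ∧ i < j ∧ j ≤ i - 1 + subLen l i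

/-- The height of vertex `j`: its distance to the root, i.e. its number of strict
ancestors. -/
def heightOf (l : List ℤ) (j : ℕ) : ℕ := Nat.card {i : ℕ | isAnc l i j}

/-- The ancestor of `j` at distance `h` from `j` (the strict ancestor whose height is
`height(j) − h`). -/
def ancAt (l : List ℤ) (j h : ℕ) : ℕ :=
  sInf {i : ℕ | isAnc l i j ∧ heightOf l i + h = heightOf l j}

/-- The sublist of increments at the (1-based) positions `a, a+1, …, b`. -/
def seg (l : List ℤ) (a b : ℕ) : List ℤ := (l.drop (a - 1)).take (b + 1 - a)

/-- The 213 transformation `Ψ_{v,u}` on depth-first walks, for `v` a strict ancestor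
of `u`: the new tree is rooted at `v` and given by `τ(v,u)`, where at its leaf `u`
one grafts the tree obtained from `τ(1,v)` by grafting `τ(u)` at its leaf `v`.
On increment lists this reads off the five segments of `l` in the order
`[v,u−1], [1,v−1], [u,u+d_u−1], [v+d_v,s], [u+d_u,v+d_v−1]`. -/
def psi213 (l : List ℤ) (v u : ℕ) : List ℤ :=
  seg l v (u - 1) ++ seg l 1 (v - 1) ++ seg l u (u + subLen l u - 1) ++
    seg l (v + subLen l v) l.length ++ seg l (u + subLen l u) (v + subLen l v - 1)

/-- `Φ_{h,u}`: apply `Ψ_{v,u}` with `v` the ancestor of `u` at distance `h`, provided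
the height of `u` is strictly greater than `h`; otherwise do nothing. -/
def phi213 (h u : ℕ) (l : List ℤ) : List ℤ :=
  if h < heightOf l u then psi213 l (ancAt l u h) u else l

/-!
Let `u` have height `H > h` and let `v` be its ancestor at distance `h`. The depth-first sequence of
the tree splits into five pieces: the vertices before `v`, those from `v` to just before `u`, the
subtree of `u`, the rest of the subtree of `v`, and the rest of the tree. The 213 transformation
exchanges the first two pieces and, accordingly, the last two. Hence `u` keeps its label, and it
also keeps its height, because the `H - h` ancestors of `u` in the first piece and the `h` ancestors
in the second one remain ancestors of `u`. In the new tree the old root is therefore the ancestor of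
`u` at distance `H - h`, so `Φ_{H-h,u}` exchanges the pieces back: the inverse of `Φ_{h,u}` is
`Φ_{H-h,u}` where `u` has height `H > h`, and the identity elsewhere.
-/

/-- `l` is the depth-first sequence of increments (number of children minus one) of an ordered
forest of `n` trees. The count `n` is an integer so that it can be an increment sum such as
`p.sum`; it is then automatically nonnegative. -/
def IsForestWalk : ℤ → List ℤ → Prop
  | n, [] => n = 0
  | n, a :: l => 0 < n ∧ -1 ≤ a ∧ IsForestWalk (n + a) l

/-- `p` is a proper initial segment of the depth-first sequence of an ordered forest of `n` trees:
after reading `p`, a positive number `n + p.sum` of subtrees is still to be explored. -/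
def IsForestPrefix : ℤ → List ℤ → Prop
  | n, [] => 0 < n
  | n, a :: p => 0 < n ∧ -1 ≤ a ∧ IsForestPrefix (n + a) p

open Classical in
/-- The height of the vertex explored right after `p`, read off from `p` alone: the vertex at the
`0`-based position `k` is a strict ancestor of it iff `p.drop k` leaves the tree rooted at `k`
unfinished. -/
def ancestorCount (p : List ℤ) : ℕ :=
  ((Finset.range p.length).filter fun k ↦ IsForestPrefix 1 (p.drop k)).card

section ForestWalks

variable {m n : ℤ} {l p q : List ℤ}

lemma IsForestWalk.sum_eq (hl : IsForestWalk n l) : l.sum = -n := by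
  induction l generalizing n with
  | nil => simpa [IsForestWalk, eq_comm] using hl
  | cons a l ih =>
    have := ih hl.2.2
    rw [List.sum_cons]
    omega

lemma IsForestWalk.ne_nil (hl : IsForestWalk n l) (hn : n ≠ 0) : l ≠ [] := by
  rintro rfl
  exact hn hl

lemma IsForestPrefix.pos (hp : IsForestPrefix n p) : 0 < n := by
  cases p with
  | nil => exact hp
  | cons a p => exact hp.1

lemma IsForestPrefix.add_sum_pos (hp : IsForestPrefix n p) : 0 < n + p.sum := by
  induction p generalizing n with
  | nil => simpa [IsForestPrefix] using hp
  | cons a p ih => simpa only [List.sum_cons, add_assoc] using ih hp.2.2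

lemma IsForestPrefix.sum_nonneg (hp : IsForestPrefix 1 p) : 0 ≤ p.sum := by
  have := hp.add_sum_pos
  omega

lemma IsForestPrefix.mono (hp : IsForestPrefix m p) (hmn : m ≤ n) : IsForestPrefix n p := by
  induction p generalizing m n with
  | nil => exact lt_of_lt_of_le hp hmn
  | cons a p ih => exact ⟨hp.1.trans_le hmn, hp.2.1, ih hp.2.2 (by omega)⟩

lemma isForestPrefix_append_iff :
    IsForestPrefix n (p ++ q) ↔ IsForestPrefix n p ∧ IsForestPrefix (n + p.sum) q := by
  induction p generalizing n with
  | nil => simpa [IsForestPrefix] using IsForestPrefix.pos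
  | cons a p ih =>
    simp only [List.cons_append, IsForestPrefix, List.sum_cons, ih, add_assoc, and_assoc]

lemma isForestWalk_append_iff (hq : q ≠ []) :
    IsForestWalk n (p ++ q) ↔ IsForestPrefix n p ∧ IsForestWalk (n + p.sum) q := by
  induction p generalizing n with
  | nil =>
    obtain ⟨a, q, rfl⟩ := List.exists_cons_of_ne_nil hq
    simpa [IsForestPrefix] using fun h : IsForestWalk n (a :: q) ↦ h.1
  | cons a p ih =>
    simp only [List.cons_append, IsForestPrefix, IsForestWalk, List.sum_cons, ih, add_assoc,
      and_assoc]

lemma IsForestWalk.append (hp : IsForestWalk m p) (hq : IsForestWalk n q) (hn : 0 ≤ n) :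
    IsForestWalk (m + n) (p ++ q) := by
  induction p generalizing m with
  | nil =>
    obtain rfl : m = 0 := hp
    simpa using hq
  | cons a p ih =>
    refine ⟨by linarith [hp.1], hp.2.1, ?_⟩
    rw [add_right_comm]
    exact ih hp.2.2

lemma IsForestWalk.exists_append (hl : IsForestWalk (m + n) l) (hm : 0 ≤ m) (hn : 0 ≤ n) :
    ∃ p q, l = p ++ q ∧ IsForestWalk m p ∧ IsForestWalk n q := by
  induction l generalizing m with
  | nil =>
    have h₀ : m + n = 0 := hl
    exact ⟨[], [], rfl, show m = 0 by omega, show n = 0 by omega⟩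
  | cons a l ih =>
    rcases hm.eq_or_lt with rfl | hm
    · exact ⟨[], a :: l, rfl, rfl, by simpa using hl⟩
    · obtain ⟨-, ha, hl⟩ := hl
      rw [add_right_comm] at hl
      obtain ⟨p, q, rfl, hp, hq⟩ := ih hl (by omega)
      exact ⟨a :: p, q, rfl, ⟨hm, ha, hp⟩, hq⟩

lemma IsForestWalk.length_lt_iff_of_append_eq {t r : List ℤ} (ht : IsForestWalk n t)
    (h : p ++ q = t ++ r) : p.length < t.length ↔ IsForestPrefix n p := by
  rcases List.append_eq_append_iff.1 h with ⟨c, rfl, -⟩ | ⟨c, rfl, -⟩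
  · rcases eq_or_ne c [] with rfl | hc
    · rw [List.append_nil] at ht ⊢
      refine iff_of_false (lt_irrefl _) fun hp ↦ ?_
      linarith [hp.add_sum_pos, ht.sum_eq]
    · refine iff_of_true ?_ ((isForestWalk_append_iff hc).1 ht).1
      have := List.length_pos_iff.2 hc
      rw [List.length_append]
      omega
  · refine iff_of_false (by simp) fun hp ↦ ?_
    linarith [(isForestPrefix_append_iff.1 hp).1.add_sum_pos, ht.sum_eq]

end ForestWalks

section Wlk

variable {p q l : List ℤ} {n : ℤ} {j : ℕ}

lemma wlk_length : wlk l l.length = l.sum := by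
  rw [wlk, List.take_length]

lemma wlk_append_length_add : wlk (p ++ q) (p.length + j) = p.sum + wlk q j := by
  simp [wlk, List.take_append, List.take_of_length_le]

lemma wlk_append_of_le (hj : j ≤ p.length) : wlk (p ++ q) j = wlk p j := by
  rw [wlk, List.take_append_of_le_length hj, wlk]

lemma isForestWalk_iff_wlk :
    IsForestWalk n l ↔
      (∀ a ∈ l, -1 ≤ a) ∧ (∀ j < l.length, 0 < n + wlk l j) ∧ n + wlk l l.length = 0 := by
  induction l generalizing n with
  | nil => simp [IsForestWalk, wlk]
  | cons a l ih =>
    have wlk_succ (j : ℕ) : n + wlk (a :: l) (j + 1) = n + a + wlk l j := by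
      simp [wlk, add_assoc]
    have wlk_zero : n + wlk (a :: l) 0 = n := by simp [wlk]
    rw [IsForestWalk, ih, List.forall_mem_cons, List.length_cons, wlk_succ,
      Nat.forall_lt_succ_left, wlk_zero]
    simp only [wlk_succ]
    tauto

lemma subLen_append {t : List ℤ} (ht : IsForestWalk 1 t) :
    subLen (p ++ (t ++ q)) (p.length + 1) = t.length := by
  have hwlk {m : ℕ} (hm : m ≤ t.length) :
      wlk (p ++ (t ++ q)) (p.length + 1 - 1 + m) = p.sum + wlk t m := by
    rw [Nat.add_sub_cancel, wlk_append_length_add, wlk_append_of_le hm]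
  have hwlk₀ : wlk (p ++ (t ++ q)) (p.length + 1 - 1) = p.sum := by
    rw [Nat.add_sub_cancel, wlk_append_of_le le_rfl, wlk_length]
  refine IsLeast.csInf_eq ⟨⟨List.length_pos_iff.2 (ht.ne_nil one_ne_zero), ?_⟩, ?_⟩
  · rw [hwlk le_rfl, hwlk₀, wlk_length, ht.sum_eq]
    rfl
  · rintro m ⟨-, hm⟩
    by_contra! hlt
    have hpos := (isForestWalk_iff_wlk.1 ht).2.1 m hlt
    rw [hwlk hlt.le, hwlk₀] at hm
    omega

end Wlk

section Ancestors

variable {p q r : List ℤ} {a : ℤ} {h : ℕ}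

lemma ancestorCount_nil : ancestorCount [] = 0 := rfl

open Classical in
lemma ancestorCount_cons :
    ancestorCount (a :: p) = ancestorCount p + if IsForestPrefix 1 (a :: p) then 1 else 0 := by
  simp only [ancestorCount, Finset.card_filter, List.length_cons, Finset.sum_range_succ',
    List.drop_succ_cons, List.drop_zero]

lemma ancestorCount_append (hq : IsForestPrefix 1 q) :
    ancestorCount (p ++ q) = ancestorCount p + ancestorCount q := by
  classical
  induction p with
  | nil => rw [List.nil_append, ancestorCount_nil, zero_add]
  | cons a p ih =>
    have hiff : IsForestPrefix 1 (a :: (p ++ q)) ↔ IsForestPrefix 1 (a :: p) := by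
      rw [← List.cons_append, isForestPrefix_append_iff, and_iff_left_iff_imp]
      exact fun hp ↦ hq.mono (by linarith [hp.sum_nonneg])
    rw [List.cons_append, ancestorCount_cons, ancestorCount_cons, ih, if_congr hiff rfl rfl]
    omega

lemma ancestorCount_pos (hp : IsForestPrefix 1 p) (hne : p ≠ []) : 0 < ancestorCount p := by
  classical
  obtain ⟨a, p, rfl⟩ := List.exists_cons_of_ne_nil hne
  rw [ancestorCount_cons, if_pos hp]
  exact Nat.succ_pos _

lemma exists_append_ancestorCount_eq (hh : h ≤ ancestorCount r) :
    ∃ p q, r = p ++ q ∧ IsForestPrefix 1 q ∧ ancestorCount q = h := by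
  classical
  induction r with
  | nil => exact ⟨[], [], rfl, one_pos, (Nat.le_zero.1 hh).symm⟩
  | cons a r ih =>
    by_cases hle : h ≤ ancestorCount r
    · obtain ⟨p, q, rfl, hq⟩ := ih hle
      exact ⟨a :: p, q, rfl, hq⟩
    · rw [ancestorCount_cons] at hh
      split_ifs at hh with hr
      · exact ⟨[], a :: r, rfl, hr, by rw [ancestorCount_cons, if_pos hr]; omega⟩
      · exact absurd hh hle

lemma ancestorCount_lt_append (hpq : IsForestPrefix 1 (p ++ q)) (hq : IsForestPrefix 1 q)
    (hp : p ≠ []) : ancestorCount q < ancestorCount (p ++ q) := by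
  have := ancestorCount_pos (isForestPrefix_append_iff.1 hpq).1 hp
  rw [ancestorCount_append hq]
  omega

lemma eq_of_append_eq_of_ancestorCount_eq {p' q' : List ℤ} (h : p ++ q = p' ++ q')
    (hq : IsForestPrefix 1 q) (hq' : IsForestPrefix 1 q')
    (hcount : ancestorCount q = ancestorCount q') : p = p' := by
  rcases List.append_eq_append_iff.1 h with ⟨c, rfl, rfl⟩ | ⟨c, rfl, rfl⟩ <;>
    rcases eq_or_ne c [] with rfl | hc
  · rw [List.append_nil]
  · exact absurd hcount (ancestorCount_lt_append hq hq' hc).ne'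
  · rw [List.append_nil]
  · exact absurd hcount (ancestorCount_lt_append hq' hq hc).ne

lemma isAnc_append_iff (hl : IsForestWalk 1 (p ++ (q ++ r))) (hq : q ≠ []) :
    isAnc (p ++ (q ++ r)) (p.length + 1) (p.length + q.length + 1) ↔ IsForestPrefix 1 q := by
  have hqr : q ++ r ≠ [] := List.append_ne_nil_of_left_ne_nil hq r
  obtain ⟨hp, hl⟩ := (isForestWalk_append_iff hqr).1 hl
  obtain ⟨t, r', heq, ht, -⟩ := hl.exists_append zero_le_one hp.sum_nonneg
  have hqpos := List.length_pos_iff.2 hq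
  rw [isAnc, heq, subLen_append ht, ← ht.length_lt_iff_of_append_eq heq]
  omega

lemma isAnc_length_succ_iff (hl : IsForestWalk 1 (p ++ q)) {i : ℕ} :
    isAnc (p ++ q) i (p.length + 1) ↔ ∃ k < p.length, IsForestPrefix 1 (p.drop k) ∧ k + 1 = i := by
  have key {k : ℕ} (hk : k < p.length) :
      isAnc (p ++ q) (k + 1) (p.length + 1) ↔ IsForestPrefix 1 (p.drop k) := by
    obtain ⟨p₁, p₂, rfl, rfl⟩ : ∃ p₁ p₂, p = p₁ ++ p₂ ∧ p₁.length = k :=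
      ⟨p.take k, p.drop k, (List.take_append_drop k p).symm, List.length_take_of_le hk.le⟩
    have hp₂ : p₂ ≠ [] := by
      rintro rfl
      simp at hk
    rw [List.append_assoc] at hl ⊢
    rw [List.length_append, isAnc_append_iff hl hp₂, List.drop_left]
  constructor
  · intro hi
    obtain ⟨k, rfl⟩ := Nat.exists_eq_add_of_le' hi.1
    have hk : k < p.length := Nat.lt_of_succ_lt_succ hi.2.1
    exact ⟨k, hk, (key hk).1 hi, rfl⟩
  · rintro ⟨k, hk, hdrop, rfl⟩
    exact (key hk).2 hdrop

lemma heightOf_length_succ (hl : IsForestWalk 1 (p ++ q)) :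
    heightOf (p ++ q) (p.length + 1) = ancestorCount p := by
  classical
  have himage : {i | isAnc (p ++ q) i (p.length + 1)} =
      (· + 1) '' ((Finset.range p.length).filter fun k ↦ IsForestPrefix 1 (p.drop k) : Set ℕ) := by
    ext i
    simp [isAnc_length_succ_iff hl, and_assoc]
  rw [heightOf, himage, Nat.card_coe_set_eq,
    Set.ncard_image_of_injective _ (add_left_injective 1), Set.ncard_coe_finset, ancestorCount]

lemma ancAt_append (hl : IsForestWalk 1 (p ++ (q ++ r))) (hq : IsForestPrefix 1 q)
    (hne : q ≠ []) :
    ancAt (p ++ (q ++ r)) (p.length + q.length + 1) (ancestorCount q) = p.length + 1 := by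
  have hl' : IsForestWalk 1 ((p ++ q) ++ r) := by rwa [List.append_assoc]
  have hheight : heightOf (p ++ (q ++ r)) (p.length + q.length + 1) =
      ancestorCount p + ancestorCount q := by
    rw [← List.append_assoc, ← List.length_append, heightOf_length_succ hl',
      ancestorCount_append hq]
  suffices hunique : {i | isAnc (p ++ (q ++ r)) i (p.length + q.length + 1) ∧
      heightOf (p ++ (q ++ r)) i + ancestorCount q =
        heightOf (p ++ (q ++ r)) (p.length + q.length + 1)} = {p.length + 1} by
    rw [ancAt, hunique, csInf_singleton]
  rw [Set.eq_singleton_iff_unique_mem]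
  refine ⟨⟨(isAnc_append_iff hl hne).2 hq, by rw [hheight, heightOf_length_succ hl]⟩, ?_⟩
  rintro i ⟨hanc, hi⟩
  rw [← List.append_assoc, ← List.length_append, isAnc_length_succ_iff hl'] at hanc
  obtain ⟨k, hk, hdrop, rfl⟩ := hanc
  obtain ⟨p', q', heq, rfl, rfl⟩ :
      ∃ p' q', p ++ q = p' ++ q' ∧ p'.length = k ∧ (p ++ q).drop k = q' :=
    ⟨_, _, (List.take_append_drop k (p ++ q)).symm, List.length_take_of_le hk.le, rfl⟩
  have happ : p ++ (q ++ r) = p' ++ ((p ++ q).drop p'.length ++ r) := by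
    rw [← List.append_assoc, ← List.append_assoc, ← heq]
  have hi' : heightOf (p ++ (q ++ r)) (p'.length + 1) = ancestorCount p' := by
    rw [happ] at hl ⊢
    exact heightOf_length_succ hl
  have hcount := congrArg ancestorCount heq
  rw [ancestorCount_append hq, ancestorCount_append hdrop] at hcount
  rw [eq_of_append_eq_of_ancestorCount_eq heq hq hdrop (by omega)]

end Ancestors

lemma seg_eq_of_eq_append {l p q r : List ℤ} {i j : ℕ} (hl : l = p ++ (q ++ r))
    (hi : i = p.length + 1) (hj : j = p.length + q.length) : seg l i j = q := by
  have hlen : j + 1 - i = q.length := by omega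
  rw [seg, hlen, hl, hi, Nat.add_sub_cancel, List.drop_left, List.take_left]

/-- A tree cut at two vertices `v` and `u`, the first a strict non-root ancestor of the second.
Its depth-first sequence is `low ++ mid ++ top ++ midRest ++ lowRest`: here `top` codes `τ(u)`,
the tree `τ(v,u)` is `mid` followed by the leaf `u` and `midRest`, and `τ(1,v)` is `low` followed
by the leaf `v` and `lowRest`. -/
structure CutTree where
  /-- The part of `τ(1,v)` explored before `v`. -/
  low : List ℤ
  /-- The part of `τ(v,u)` explored before `u`. -/
  mid : List ℤ
  /-- The subtree `τ(u)`. -/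
  top : List ℤ
  /-- The part of `τ(v,u)` explored after `u`. -/
  midRest : List ℤ
  /-- The part of `τ(1,v)` explored after `v`. -/
  lowRest : List ℤ
  low_ne_nil : low ≠ []
  mid_ne_nil : mid ≠ []
  isForestPrefix_low : IsForestPrefix 1 low
  isForestPrefix_mid : IsForestPrefix 1 mid
  isForestWalk_top : IsForestWalk 1 top
  isForestWalk_midRest : IsForestWalk mid.sum midRest
  isForestWalk_lowRest : IsForestWalk low.sum lowRest

namespace CutTree

variable (c : CutTree)

/-- The depth-first sequence of the whole tree. -/
def walk : List ℤ := c.low ++ (c.mid ++ (c.top ++ (c.midRest ++ c.lowRest)))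

/-- The label of the lower cut vertex `v`. -/
def lowerCut : ℕ := c.low.length + 1

/-- The label of the upper cut vertex `u`. -/
def upperCut : ℕ := c.low.length + c.mid.length + 1

/-- The 213 transformation: the pieces `τ(1,v)` and `τ(v,u)` exchange their places. -/
def swap : CutTree where
  low := c.mid
  mid := c.low
  top := c.top
  midRest := c.lowRest
  lowRest := c.midRest
  low_ne_nil := c.mid_ne_nil
  mid_ne_nil := c.low_ne_nil
  isForestPrefix_low := c.isForestPrefix_mid
  isForestPrefix_mid := c.isForestPrefix_low
  isForestWalk_top := c.isForestWalk_top
  isForestWalk_midRest := c.isForestWalk_lowRest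
  isForestWalk_lowRest := c.isForestWalk_midRest

lemma swap_swap : c.swap.swap = c := rfl

lemma upperCut_swap : c.swap.upperCut = c.upperCut := by
  simp only [upperCut, swap, Nat.add_comm c.mid.length]

lemma walk_swap_perm : c.swap.walk.Perm c.walk :=
  (List.perm_append_comm_assoc _ _ _).trans
    (((List.perm_append_comm.append_left _).append_left _).append_left _)

lemma isForestWalk_subtree : IsForestWalk 1 (c.mid ++ (c.top ++ c.midRest)) := by
  have hne : c.top ++ c.midRest ≠ [] :=
    List.append_ne_nil_of_left_ne_nil (c.isForestWalk_top.ne_nil one_ne_zero) _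
  exact (isForestWalk_append_iff hne).2 ⟨c.isForestPrefix_mid,
    c.isForestWalk_top.append c.isForestWalk_midRest c.isForestPrefix_mid.sum_nonneg⟩

lemma isForestWalk_walk : IsForestWalk 1 c.walk := by
  have hrest := c.isForestWalk_subtree.append c.isForestWalk_lowRest
    c.isForestPrefix_low.sum_nonneg
  simp only [List.append_assoc] at hrest
  exact (isForestWalk_append_iff (List.append_ne_nil_of_left_ne_nil c.mid_ne_nil _)).2
    ⟨c.isForestPrefix_low, hrest⟩

lemma heightOf_upperCut :
    heightOf c.walk c.upperCut = ancestorCount c.low + ancestorCount c.mid := by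
  have hwalk := c.isForestWalk_walk
  rw [walk, ← List.append_assoc] at hwalk ⊢
  rw [upperCut, ← List.length_append, heightOf_length_succ hwalk,
    ancestorCount_append c.isForestPrefix_mid]

lemma ancAt_upperCut : ancAt c.walk c.upperCut (ancestorCount c.mid) = c.lowerCut :=
  ancAt_append c.isForestWalk_walk c.isForestPrefix_mid c.mid_ne_nil

lemma subLen_lowerCut :
    subLen c.walk c.lowerCut = c.mid.length + c.top.length + c.midRest.length := by
  have := subLen_append (p := c.low) (q := c.lowRest) c.isForestWalk_subtree
  simpa only [walk, lowerCut, List.append_assoc, List.length_append, Nat.add_assoc] using this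

lemma subLen_upperCut : subLen c.walk c.upperCut = c.top.length := by
  have := subLen_append (p := c.low ++ c.mid) (q := c.midRest ++ c.lowRest) c.isForestWalk_top
  simpa only [walk, upperCut, List.append_assoc, List.length_append] using this

lemma psi213_walk : psi213 c.walk c.lowerCut c.upperCut = c.swap.walk := by
  have htop₀ := List.length_pos_iff.2 (c.isForestWalk_top.ne_nil one_ne_zero)
  have hlow : seg c.walk 1 (c.lowerCut - 1) = c.low :=
    seg_eq_of_eq_append (p := []) rfl rfl (by simp [lowerCut])
  have hmid : seg c.walk c.lowerCut (c.upperCut - 1) = c.mid := seg_eq_of_eq_append rfl rfl rfl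
  have htop : seg c.walk c.upperCut (c.upperCut + c.top.length - 1) = c.top := by
    apply seg_eq_of_eq_append (p := c.low ++ c.mid) (r := c.midRest ++ c.lowRest) <;>
      simp only [walk, upperCut, List.length_append, List.append_assoc]
    omega
  have hmidRest : seg c.walk (c.upperCut + c.top.length)
      (c.lowerCut + (c.mid.length + c.top.length + c.midRest.length) - 1) = c.midRest := by
    apply seg_eq_of_eq_append (p := c.low ++ c.mid ++ c.top) (r := c.lowRest) <;>
      simp only [walk, upperCut, lowerCut, List.length_append, List.append_assoc] <;> omega
  have hlowRest : seg c.walk (c.lowerCut + (c.mid.length + c.top.length + c.midRest.length))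
      c.walk.length = c.lowRest := by
    apply seg_eq_of_eq_append (p := c.low ++ c.mid ++ c.top ++ c.midRest) (r := []) <;>
      simp only [walk, lowerCut, List.length_append, List.append_assoc, List.append_nil] <;> omega
  rw [psi213, c.subLen_upperCut, c.subLen_lowerCut, hlow, hmid, htop, hmidRest, hlowRest]
  simp only [walk, swap, List.append_assoc]

lemma phi213_walk : phi213 (ancestorCount c.mid) c.upperCut c.walk = c.swap.walk := by
  have hlow := ancestorCount_pos c.isForestPrefix_low c.low_ne_nil
  rw [phi213, c.heightOf_upperCut, if_pos (by omega), c.ancAt_upperCut, c.psi213_walk]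

lemma heightOf_upperCut_swap : heightOf c.swap.walk c.upperCut = heightOf c.walk c.upperCut := by
  rw [← c.upperCut_swap, heightOf_upperCut, c.upperCut_swap, heightOf_upperCut, Nat.add_comm]
  rfl

end CutTree

section Phi

variable {l : List ℤ} {h u : ℕ}

lemma exists_cutTree (hl : IsForestWalk 1 l) (hh : 0 < h) (hu : 1 ≤ u) (hul : u ≤ l.length)
    (hlt : h < heightOf l u) :
    ∃ c : CutTree, c.walk = l ∧ c.upperCut = u ∧ ancestorCount c.mid = h := by
  obtain ⟨p, r, rfl, rfl⟩ : ∃ p r, l = p ++ r ∧ p.length + 1 = u :=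
    ⟨l.take (u - 1), l.drop (u - 1), (List.take_append_drop _ l).symm,
      by rw [List.length_take]; omega⟩
  have hr : r ≠ [] := by
    rintro rfl
    simp at hul
  rw [heightOf_length_succ hl] at hlt
  obtain ⟨hp, hr⟩ := (isForestWalk_append_iff hr).1 hl
  obtain ⟨low, mid, rfl, hmid, rfl⟩ := exists_append_ancestorCount_eq hlt.le
  have hlow := (isForestPrefix_append_iff.1 hp).1
  rw [ancestorCount_append hmid] at hlt
  have hlow₀ : low ≠ [] := by
    rintro rfl
    simp [ancestorCount_nil] at hlt
  have hmid₀ : mid ≠ [] := by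
    rintro rfl
    simp [ancestorCount_nil] at hh
  rw [List.sum_append, add_comm low.sum] at hr
  obtain ⟨top, rest, rfl, htop, hrest⟩ :=
    hr.exists_append zero_le_one (add_nonneg hmid.sum_nonneg hlow.sum_nonneg)
  obtain ⟨midRest, lowRest, rfl, hmidRest, hlowRest⟩ :=
    hrest.exists_append hmid.sum_nonneg hlow.sum_nonneg
  exact ⟨⟨low, mid, top, midRest, lowRest, hlow₀, hmid₀, hlow, hmid, htop, hmidRest, hlowRest⟩,
    (List.append_assoc ..).symm, by rw [CutTree.upperCut, List.length_append], rfl⟩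

lemma phi213_of_heightOf_le (hle : heightOf l u ≤ h) : phi213 h u l = l :=
  if_neg hle.not_gt

lemma isForestWalk_phi213 (hl : IsForestWalk 1 l) (hh : 0 < h) (hu : 1 ≤ u)
    (hul : u ≤ l.length) : IsForestWalk 1 (phi213 h u l) := by
  rcases lt_or_ge h (heightOf l u) with hlt | hle
  · obtain ⟨c, rfl, rfl, rfl⟩ := exists_cutTree hl hh hu hul hlt
    rw [c.phi213_walk]
    exact c.swap.isForestWalk_walk
  · rwa [phi213_of_heightOf_le hle]

lemma phi213_perm (hl : IsForestWalk 1 l) (hh : 0 < h) (hu : 1 ≤ u) (hul : u ≤ l.length) :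
    (phi213 h u l).Perm l := by
  rcases lt_or_ge h (heightOf l u) with hlt | hle
  · obtain ⟨c, rfl, rfl, rfl⟩ := exists_cutTree hl hh hu hul hlt
    rw [c.phi213_walk]
    exact c.walk_swap_perm
  · rw [phi213_of_heightOf_le hle]

lemma heightOf_phi213 (hl : IsForestWalk 1 l) (hh : 0 < h) (hu : 1 ≤ u) (hul : u ≤ l.length) :
    heightOf (phi213 h u l) u = heightOf l u := by
  rcases lt_or_ge h (heightOf l u) with hlt | hle
  · obtain ⟨c, rfl, rfl, rfl⟩ := exists_cutTree hl hh hu hul hlt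
    rw [c.phi213_walk, c.heightOf_upperCut_swap]
  · rw [phi213_of_heightOf_le hle]

lemma phi213_sub_phi213 (hl : IsForestWalk 1 l) (hh : 0 < h) (hu : 1 ≤ u) (hul : u ≤ l.length)
    (hlt : h < heightOf l u) : phi213 (heightOf l u - h) u (phi213 h u l) = l := by
  obtain ⟨c, rfl, rfl, rfl⟩ := exists_cutTree hl hh hu hul hlt
  rw [c.phi213_walk, c.heightOf_upperCut, Nat.add_sub_cancel, ← c.upperCut_swap]
  exact c.swap.phi213_walk.trans (congrArg CutTree.walk c.swap_swap)

/-- The inverse of `Φ_{h,u}`: when `u` has height `H > h`, apply `Φ_{H-h,u}`. -/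
def phi213Inv (h u : ℕ) (l : List ℤ) : List ℤ :=
  if h < heightOf l u then phi213 (heightOf l u - h) u l else l

lemma phi213Inv_phi213 (hl : IsForestWalk 1 l) (hh : 0 < h) (hu : 1 ≤ u) (hul : u ≤ l.length) :
    phi213Inv h u (phi213 h u l) = l := by
  rw [phi213Inv, heightOf_phi213 hl hh hu hul]
  split_ifs with hlt
  · exact phi213_sub_phi213 hl hh hu hul hlt
  · exact if_neg hlt

lemma phi213_phi213Inv (hl : IsForestWalk 1 l) (hh : 0 < h) (hu : 1 ≤ u) (hul : u ≤ l.length) :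
    phi213 h u (phi213Inv h u l) = l := by
  rw [phi213Inv]
  split_ifs with hlt
  · have := phi213_sub_phi213 hl (Nat.sub_pos_of_lt hlt) hu hul (by omega)
    rwa [Nat.sub_sub_self hlt.le] at this
  · exact if_neg hlt

end Phi

section Excursions

variable {N : ℕ → ℕ} {s h u : ℕ} {l : List ℤ}

lemma IsExcursion.neg_one_le (hl : IsExcursion N s l) (hNfin : (Function.support N).Finite)
    (hNsize : ∑ᶠ i, N i = s) : ∀ a ∈ l, -1 ≤ a := by
  obtain ⟨hlen, -, -, hcount⟩ := hl
  set l' := l.filter (-1 ≤ ·) with hl'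
  have hcount' (i : ℕ) : l'.count ((i : ℤ) - 1) = N i := by
    rw [hl', List.count_filter (by simp only [decide_eq_true_eq]; omega), hcount]
  have hinj : Function.Injective fun i : ℕ ↦ (i : ℤ) - 1 := fun i j hij ↦ by
    simpa using hij
  have hmem : ∀ a ∈ (l' : Multiset ℤ), a ∈ hNfin.toFinset.image fun i : ℕ ↦ (i : ℤ) - 1 := by
    intro a ha
    have hge : -1 ≤ a := by simpa using List.of_mem_filter ha
    refine Finset.mem_image.2 ⟨(a + 1).toNat, ?_, by omega⟩
    have hcast : (((a + 1).toNat : ℕ) : ℤ) - 1 = a := by omega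
    rw [Set.Finite.mem_toFinset, Function.mem_support, ← hcount', hcast]
    exact (List.count_pos_iff.2 ha).ne'
  have hlen' : l'.length = l.length := by
    have := Multiset.sum_count_eq_card hmem
    rw [Finset.sum_image hinj.injOn] at this
    simp only [Multiset.coe_count, hcount', Multiset.coe_card] at this
    rw [hlen, ← hNsize, finsum_eq_sum _ hNfin, this]
  simpa using List.length_filter_eq_length_iff.1 hlen'

lemma isExcursion_iff (hNfin : (Function.support N).Finite) (hNsize : ∑ᶠ i, N i = s) :
    IsExcursion N s l ↔
      IsForestWalk 1 l ∧ l.length = s ∧ ∀ i : ℕ, l.count ((i : ℤ) - 1) = N i := by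
  constructor
  · intro hl
    have hge := hl.neg_one_le hNfin hNsize
    obtain ⟨rfl, hpos, hend, hcount⟩ := hl
    refine ⟨isForestWalk_iff_wlk.2 ⟨hge, fun j hj ↦ ?_, by omega⟩, rfl, hcount⟩
    linarith [hpos j hj]
  · rintro ⟨hl, rfl, hcount⟩
    obtain ⟨-, hpos, hend⟩ := isForestWalk_iff_wlk.1 hl
    refine ⟨rfl, fun j hj ↦ ?_, by omega, hcount⟩
    linarith [hpos j hj]

lemma isExcursion_phi213 (hNfin : (Function.support N).Finite) (hNsize : ∑ᶠ i, N i = s)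
    (hl : IsExcursion N s l) (hh : 0 < h) (hu : 1 ≤ u) (hus : u ≤ s) :
    IsExcursion N s (phi213 h u l) := by
  rw [isExcursion_iff hNfin hNsize] at hl ⊢
  obtain ⟨hwalk, rfl, hcount⟩ := hl
  have hperm := phi213_perm hwalk hh hu hus
  exact ⟨isForestWalk_phi213 hwalk hh hu hus, hperm.length_eq,
    fun i ↦ by rw [hperm.count_eq, hcount]⟩

lemma isExcursion_phi213Inv (hNfin : (Function.support N).Finite) (hNsize : ∑ᶠ i, N i = s)
    (hl : IsExcursion N s l) (hu : 1 ≤ u) (hus : u ≤ s) :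
    IsExcursion N s (phi213Inv h u l) := by
  rw [phi213Inv]
  split_ifs with hlt
  · exact isExcursion_phi213 hNfin hNsize hl (Nat.sub_pos_of_lt hlt) hu hus
  · exact hl

end Excursions

/-- for a fixed degree sequence `N` of size `s`, `h ≥ 1` and
`u ∈ {2,…,s}`, the transformation `Φ_{h,u}` is a bijection of `E_s` onto itself. -/
theorem stmt9
    (N : ℕ → ℕ) (s : ℕ)
    (hNfin : (Function.support N).Finite)
    (hNsize : ∑ᶠ i, N i = s) (hNdeg : s = 1 + ∑ᶠ i, i * N i)
    (h : ℕ) (hh : 1 ≤ h) (u : ℕ) (hu2 : 2 ≤ u) (hus : u ≤ s) :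
    Set.BijOn (phi213 h u) {l : List ℤ | IsExcursion N s l}
      {l : List ℤ | IsExcursion N s l} := by
  have hu : 1 ≤ u := by omega
  have hwalk {l : List ℤ} (hl : IsExcursion N s l) : IsForestWalk 1 l :=
    ((isExcursion_iff hNfin hNsize).1 hl).1
  have hul {l : List ℤ} (hl : IsExcursion N s l) : u ≤ l.length := hus.trans_eq hl.1.symm
  have hinv : Set.InvOn (phi213Inv h u) (phi213 h u) {l : List ℤ | IsExcursion N s l}
      {l : List ℤ | IsExcursion N s l} :=
    ⟨fun _ hl ↦ phi213Inv_phi213 (hwalk hl) hh hu (hul hl),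
      fun _ hl ↦ phi213_phi213Inv (hwalk hl) hh hu (hul hl)⟩
  exact hinv.bijOn (fun _ hl ↦ isExcursion_phi213 hNfin hNsize hl hh hu hus)
    fun _ hl ↦ isExcursion_phi213Inv hNfin hNsize hl hu hus
end
end

section
/- Let n ∈ ℕ and let x = (x_1,…,x_n) ∈ ℝⁿ satisfy the different-subset-sum property: Σ_{i∈I} x_i ≠ Σ_{i∈J} x_i for all distinct subsets I ≠ J of [n]. Let π be a uniformly random permutation of [n] and let X be the step process on [0,1] with X_t = Σ_{i ≤ ⌊nt⌋} x_{π(i)}. Then X attains its minimum over [0,1] at a unique time ρ and its maximum at a unique time η (both multiples of 1/n), and the random vectors (X̲̲_{ρ+j/n} − X̲̲_ρ)_{0 ≤ j ≤ n−nρ} and (X̄_{d(j/n)})_{0 ≤ j ≤ nη} have the same distribution, where X̲̲_t = min{X_s : t ≤ s ≤ 1} is the future-minimum process, X̄_t = max{X_s : 0 ≤ s ≤ t} is the running maximum, and d(t) = inf{s ≥ t : X_s = X̄_s}. -/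
open MeasureTheory Set Filter
open scoped ENNReal

noncomputable section

/-- The future-minimum `X̲̲_{j/n} = min{X_s : j/n ≤ s ≤ 1}` on the grid. -/
def futMin (n : ℕ) (w : ℕ → ℝ) (j : ℕ) : ℝ := sInf (w '' Set.Icc j n)

/-- The running maximum `X̄_{j/n} = max{X_s : 0 ≤ s ≤ j/n}` on the grid. -/
def runMax (w : ℕ → ℝ) (j : ℕ) : ℝ := sSup (w '' Set.Icc 0 j)

/-- `nρ`: the (first) grid index at which the minimum over `[0,1]` is attained. -/
def minIdx (n : ℕ) (w : ℕ → ℝ) : ℕ := sInf {j : ℕ | j ≤ n ∧ ∀ i ≤ n, w j ≤ w i}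

/-- `nη`: the (first) grid index at which the maximum over `[0,1]` is attained. -/
def maxIdx (n : ℕ) (w : ℕ → ℝ) : ℕ := sInf {j : ℕ | j ≤ n ∧ ∀ i ≤ n, w i ≤ w j}

/-- `n·d(j/n)`: the right endpoint of the excursion below the maximum straddling `j/n`,
`d(t) = inf{s ≥ t : X_s = X̄_s}`, on the grid. -/
def dIdx (w : ℕ → ℝ) (j : ℕ) : ℕ := sInf {l : ℕ | j ≤ l ∧ w l = runMax w l}

/-- The vector `(X̲̲_{ρ+j/n} − X̲̲_ρ)_{0 ≤ j ≤ n−nρ}`, extended by constancy to all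
`j ∈ ℕ` by capping the index at `n − nρ`. -/
def postMinVec (n : ℕ) (w : ℕ → ℝ) (j : ℕ) : ℝ :=
  futMin n w (minIdx n w + min j (n - minIdx n w)) - futMin n w (minIdx n w)

/-- The vector `(X̄_{d(j/n)})_{0 ≤ j ≤ nη}`, extended by constancy to all `j ∈ ℕ`
by capping the index at `nη`. -/
def maxAtDVec (n : ℕ) (w : ℕ → ℝ) (j : ℕ) : ℝ :=
  runMax w (dIdx w (min j (maxIdx n w)))

/-!
Run the path backwards: with `η` the time of its maximum, the post-minimum vector of the reversed
path is `(X̄_η - X̄_{η-j})_j`. A uniform permutation read backwards is again uniform, so this vector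
has to be compared in law with `(X̄_{d(j)})_j`.

Cut the path before `η` at its records into ladder blocks, each an excursion below the maximum that
ends at the next record. Reversing the order of the blocks, while keeping each block and the path
after `η` as they are, is an involution on permutations. It fixes `η` and reflects the records
through `t ↦ η - t`. Hence the first record of the new path from time `j` on is the reflection of
the last record of the old path up to time `η - j`, and its height is `X̄_η - X̄_{η-j}`.
-/

section PartialSum

variable {α M : Type*}

/-- The position after `j` steps of the walk from `0` that successively makes the steps `x a`,
for `a` running through the list `r`; the walk stays put after time `r.length`. Indexing the steps
by letters keeps apart distinct steps of equal size. -/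
def partialSum [AddMonoid M] (x : α → M) (r : List α) (j : ℕ) : M := ((r.take j).map x).sum

/-- The walk `w` on `[0, n]` run backwards from its endpoint: its steps are those of `w` in the
opposite order. -/
def timeReversal [Sub M] (n : ℕ) (w : ℕ → M) (j : ℕ) : M := w n - w (n - j)

section AddMonoid

variable [AddMonoid M] (x : α → M)

@[simp]
theorem partialSum_zero (r : List α) : partialSum x r 0 = 0 := by simp [partialSum]

@[simp]
theorem partialSum_length (r : List α) : partialSum x r r.length = (r.map x).sum := by
  simp [partialSum]

theorem partialSum_append_of_le {l : List α} {j : ℕ} (h : j ≤ l.length) (r : List α) :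
    partialSum x (l ++ r) j = partialSum x l j := by
  simp [partialSum, List.take_append_of_le_length h]

theorem partialSum_append_length_add (l r : List α) (j : ℕ) :
    partialSum x (l ++ r) (l.length + j) = (l.map x).sum + partialSum x r j := by
  simp [partialSum, List.take_length_add_append]

theorem partialSum_append_length (l r : List α) :
    partialSum x (l ++ r) l.length = (l.map x).sum := by
  rw [partialSum_append_of_le x le_rfl, partialSum_length]

theorem partialSum_take {r : List α} {j k : ℕ} (h : j ≤ k) :
    partialSum x (r.take k) j = partialSum x r j := by
  simp [partialSum, List.take_take, min_eq_left h]

end AddMonoid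

theorem partialSum_reverse [AddCommGroup M] (x : α → M) (r : List α) :
    partialSum x r.reverse = timeReversal r.length (partialSum x r) := by
  funext j
  have hsplit := List.sum_take_add_sum_drop (r.map x) (r.length - j)
  simp only [partialSum, timeReversal, List.take_reverse, List.map_reverse, List.sum_reverse,
    List.take_length, List.map_take, List.map_drop] at hsplit ⊢
  rw [← hsplit, add_sub_cancel_left]

end PartialSum

section Record

/-- The walk `w` has a weak record at time `t`: it is then at its running maximum. -/
def IsRecord {M : Type*} [LE M] (w : ℕ → M) (t : ℕ) : Prop := ∀ i ≤ t, w i ≤ w t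

theorem isRecord_zero {M : Type*} [Preorder M] (w : ℕ → M) : IsRecord w 0 := fun i hi => by
  rw [Nat.le_zero.1 hi]

theorem isGreatest_runMax (w : ℕ → ℝ) (t : ℕ) : IsGreatest (w '' Icc 0 t) (runMax w t) :=
  have hfin : (w '' Icc 0 t).Finite := (finite_Icc 0 t).image w
  ⟨Nonempty.csSup_mem ⟨w 0, 0, by simp, rfl⟩ hfin, fun _ h => le_csSup hfin.bddAbove h⟩

theorem le_runMax (w : ℕ → ℝ) {i t : ℕ} (h : i ≤ t) : w i ≤ runMax w t :=
  (isGreatest_runMax w t).2 ⟨i, ⟨i.zero_le, h⟩, rfl⟩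

theorem isRecord_iff_eq_runMax {w : ℕ → ℝ} {t : ℕ} : IsRecord w t ↔ w t = runMax w t := by
  refine ⟨fun h => (le_runMax w le_rfl).antisymm ?_, fun h i hi => h ▸ le_runMax w hi⟩
  obtain ⟨i, hi, hwi⟩ := (isGreatest_runMax w t).1
  exact hwi ▸ h i hi.2

theorem exists_isGreatest_isRecord (w : ℕ → ℝ) (t : ℕ) :
    ∃ g, IsGreatest {s | s ≤ t ∧ IsRecord w s} g ∧ w g = runMax w t := by
  have hfin : {s | s ≤ t ∧ IsRecord w s}.Finite := (finite_Iic t).subset fun _ hs => hs.1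
  obtain ⟨g, hg, hmax⟩ := exists_max_image _ id hfin ⟨0, t.zero_le, isRecord_zero w⟩
  refine ⟨g, ⟨hg, hmax⟩, (le_runMax w hg.1).antisymm ?_⟩
  obtain ⟨k, hk, hwk⟩ := (isGreatest_runMax w t).1
  have hkrec : IsRecord w k := fun i hi => hwk ▸ le_runMax w (hi.trans hk.2)
  exact hwk ▸ hg.2 k (hmax k ⟨hk.2, hkrec⟩)

theorem dIdx_eq_of_isLeast {w : ℕ → ℝ} {j d : ℕ} (h : IsLeast {t | j ≤ t ∧ IsRecord w t} d) :
    dIdx w j = d := by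
  simp only [isRecord_iff_eq_runMax] at h
  exact h.csInf_eq

/-- The walk `w'` reverses the ladder of records of `w` below time `m`: the records up to time `m`
occur at the reflected times, and the increments of the record heights are taken in the opposite
order. -/
structure ReversesRecords {M : Type*} [LE M] [Sub M] (m : ℕ) (w w' : ℕ → M) : Prop where
  isRecord_iff : ∀ t ≤ m, IsRecord w' (m - t) ↔ IsRecord w t
  apply_sub : ∀ t ≤ m, IsRecord w t → w' (m - t) = w m - w t

-- If `g` is the last record of `w` up to time `m - j`, then `m - g` is the first record of `w'`
-- from time `j` on.
theorem ReversesRecords.runMax_dIdx {m : ℕ} {w w' : ℕ → ℝ} (h : ReversesRecords m w w') {j : ℕ}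
    (hj : j ≤ m) : runMax w' (dIdx w' j) = w m - runMax w (m - j) := by
  obtain ⟨g, ⟨⟨hgj, hg⟩, hgmax⟩, hwg⟩ := exists_isGreatest_isRecord w (m - j)
  have hg' : IsRecord w' (m - g) := (h.isRecord_iff g (by lia)).2 hg
  have hd : dIdx w' j = m - g := by
    refine dIdx_eq_of_isLeast ⟨⟨by lia, hg'⟩, fun l ⟨hjl, hl⟩ => ?_⟩
    by_contra! hlt
    have hrec : IsRecord w (m - l) := by
      rwa [← h.isRecord_iff _ (by lia), Nat.sub_sub_self (by lia)]
    have := hgmax ⟨by lia, hrec⟩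
    lia
  rw [hd, ← isRecord_iff_eq_runMax.1 hg', h.apply_sub g (by lia) hg, hwg]

end Record

section Extremum

theorem existsUnique_forall_le_of_injOn {M : Type*} [LinearOrder M] {n : ℕ} {w : ℕ → M}
    (hw : InjOn w (Iic n)) : ∃! j, j ≤ n ∧ ∀ i ≤ n, w j ≤ w i := by
  obtain ⟨k, hk, hmin⟩ := exists_min_image (Iic n) w (finite_Iic n) ⟨0, n.zero_le⟩
  exact ⟨k, ⟨hk, hmin⟩, fun j ⟨hj, hj'⟩ => hw hj hk ((hj' k hk).antisymm (hmin j hj))⟩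

theorem existsUnique_forall_ge_of_injOn {M : Type*} [LinearOrder M] {n : ℕ} {w : ℕ → M}
    (hw : InjOn w (Iic n)) : ∃! j, j ≤ n ∧ ∀ i ≤ n, w i ≤ w j :=
  existsUnique_forall_le_of_injOn (M := Mᵒᵈ) hw

variable {n : ℕ} {w : ℕ → ℝ}

theorem maxIdx_spec (hw : InjOn w (Iic n)) :
    maxIdx n w ≤ n ∧ ∀ i ≤ n, w i ≤ w (maxIdx n w) :=
  Nat.sInf_mem (s := {j | j ≤ n ∧ ∀ i ≤ n, w i ≤ w j}) (existsUnique_forall_ge_of_injOn hw).exists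

theorem maxIdx_eq_of_forall_le (hw : InjOn w (Iic n)) {k : ℕ} (hk : k ≤ n)
    (h : ∀ i ≤ n, w i ≤ w k) : maxIdx n w = k :=
  (existsUnique_forall_ge_of_injOn hw).unique (maxIdx_spec hw) ⟨hk, h⟩

theorem minIdx_eq_of_forall_le (hw : InjOn w (Iic n)) {k : ℕ} (hk : k ≤ n)
    (h : ∀ i ≤ n, w k ≤ w i) : minIdx n w = k :=
  have hex := existsUnique_forall_le_of_injOn hw
  hex.unique (Nat.sInf_mem (s := {j | j ≤ n ∧ ∀ i ≤ n, w j ≤ w i}) hex.exists) ⟨hk, h⟩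

theorem isRecord_maxIdx (hw : InjOn w (Iic n)) : IsRecord w (maxIdx n w) :=
  have ⟨hle, hmax⟩ := maxIdx_spec hw
  fun i hi => hmax i (hi.trans hle)

theorem injOn_timeReversal {M : Type*} [AddGroup M] {n : ℕ} {w : ℕ → M} (hw : InjOn w (Iic n)) :
    InjOn (timeReversal n w) (Iic n) := fun i hi j hj hij => by
  simp only [mem_Iic] at hi hj
  have := hw (n.sub_le i) (n.sub_le j) (sub_right_injective hij)
  lia

theorem minIdx_timeReversal (hw : InjOn w (Iic n)) :
    minIdx n (timeReversal n w) = n - maxIdx n w := by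
  obtain ⟨hle, hmax⟩ := maxIdx_spec hw
  refine minIdx_eq_of_forall_le (injOn_timeReversal hw) (n.sub_le _) fun i _ => ?_
  rw [timeReversal, timeReversal, Nat.sub_sub_self hle]
  exact sub_le_sub_left (hmax _ (n.sub_le i)) _

theorem futMin_timeReversal (w : ℕ → ℝ) {j : ℕ} (hj : j ≤ n) :
    futMin n (timeReversal n w) j = w n - runMax w (n - j) := by
  obtain ⟨k, hk, hwk⟩ := (isGreatest_runMax w (n - j)).1
  refine IsLeast.csInf_eq ⟨⟨n - k, ⟨?_, n.sub_le k⟩, ?_⟩, ?_⟩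
  · have := hk.2
    lia
  · rw [timeReversal, Nat.sub_sub_self (hk.2.trans (n.sub_le j)), hwk]
  · rintro _ ⟨i, hi, rfl⟩
    exact sub_le_sub_left (le_runMax w (Nat.sub_le_sub_left hi.1 n)) _

theorem postMinVec_timeReversal (hw : InjOn w (Iic n)) (j : ℕ) :
    postMinVec n (timeReversal n w) j =
      w (maxIdx n w) - runMax w (maxIdx n w - min j (maxIdx n w)) := by
  have hle := (maxIdx_spec hw).1
  rw [postMinVec, minIdx_timeReversal hw, Nat.sub_sub_self hle, futMin_timeReversal w (by lia),
    futMin_timeReversal w (by lia), Nat.sub_sub_self hle, ← Nat.sub_sub, Nat.sub_sub_self hle,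
    ← isRecord_iff_eq_runMax.1 (isRecord_maxIdx hw)]
  ring

theorem ReversesRecords.maxAtDVec_eq {w' : ℕ → ℝ} (h : ReversesRecords (maxIdx n w) w w')
    (hmax : maxIdx n w' = maxIdx n w) (hw : InjOn w (Iic n)) :
    maxAtDVec n w' = postMinVec n (timeReversal n w) := by
  funext j
  rw [maxAtDVec, hmax, h.runMax_dIdx (min_le_right _ _), postMinVec_timeReversal hw]

end Extremum

section Ladder

variable {α M : Type*} [AddMonoid M] [LinearOrder M] {x : α → M}

/-- The walk along the list `l` is strictly negative at every positive time. -/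
def IsNegativeWalk (x : α → M) (l : List α) : Prop :=
  ∀ k, 0 < k → k ≤ l.length → partialSum x l k < 0

/-- An excursion below the maximum: the walk along `l` is strictly negative until its last step,
which takes it to its first weak record after time `0`. -/
structure IsLadderBlock (x : α → M) (l : List α) : Prop where
  length_pos : 0 < l.length
  sum_nonneg : 0 ≤ (l.map x).sum
  neg : ∀ k, 0 < k → k < l.length → partialSum x l k < 0

/-- `r` is the concatenation of the ladder blocks `L` and of a final piece `l`, along which the
walk stays below its last record. -/
structure IsLadderDecomposition (x : α → M) (r : List α) (L : List (List α)) (l : List α) :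
    Prop where
  isLadderBlock : ∀ b ∈ L, IsLadderBlock x b
  isNegativeWalk : IsNegativeWalk x l
  eq_append : r = L.flatten ++ l

/-- `s` arises from `r` by reversing the order of the ladder blocks of `r`; the order of the steps
inside each block and the piece after the last record are left unchanged. -/
def IsLadderReversal (x : α → M) (r s : List α) : Prop :=
  ∃ L l, IsLadderDecomposition x r L l ∧ s = L.reverse.flatten ++ l

theorem IsLadderDecomposition.cons {b r : List α} {L : List (List α)} {l : List α}
    (h : IsLadderDecomposition x r L l) (hb : IsLadderBlock x b) :
    IsLadderDecomposition x (b ++ r) (b :: L) l where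
  isLadderBlock := List.forall_mem_cons.2 ⟨hb, h.isLadderBlock⟩
  isNegativeWalk := h.isNegativeWalk
  eq_append := by rw [h.eq_append, List.flatten_cons, List.append_assoc]

theorem exists_isLadderBlock_append {r : List α} (h : ¬IsNegativeWalk x r) :
    ∃ b s, IsLadderBlock x b ∧ r = b ++ s := by
  classical
  have hex : ∃ k, 0 < k ∧ k ≤ r.length ∧ 0 ≤ partialSum x r k := by
    simpa only [IsNegativeWalk, not_forall, not_lt, exists_prop] using h
  obtain ⟨hpos, hle, hsum⟩ := Nat.find_spec hex
  have hlen : (r.take (Nat.find hex)).length = Nat.find hex := List.length_take_of_le hle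
  refine ⟨r.take (Nat.find hex), r.drop (Nat.find hex), ⟨by rwa [hlen], hsum, fun k hk hlt => ?_⟩,
    (List.take_append_drop _ r).symm⟩
  rw [hlen] at hlt
  have hfirst := Nat.find_min hex hlt
  rw [partialSum_take x hlt.le]
  exact not_le.1 fun hnonneg => hfirst ⟨hk, hlt.le.trans hle, hnonneg⟩

theorem exists_isLadderDecomposition (x : α → M) (r : List α) :
    ∃ L l, IsLadderDecomposition x r L l := by
  by_cases hr : IsNegativeWalk x r
  · exact ⟨[], r, by simp, hr, by simp⟩
  · obtain ⟨b, s, hb, rfl⟩ := exists_isLadderBlock_append hr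
    have : s.length < (b ++ s).length := by simpa using hb.length_pos
    obtain ⟨L, l, h⟩ := exists_isLadderDecomposition x s
    exact ⟨b :: L, l, h.cons hb⟩
termination_by r.length

theorem IsLadderBlock.not_isNegativeWalk_append {b : List α} (hb : IsLadderBlock x b)
    (s : List α) : ¬IsNegativeWalk x (b ++ s) := fun h => by
  have hneg := h b.length hb.length_pos (by simp)
  rw [partialSum_append_length] at hneg
  exact hneg.not_ge hb.sum_nonneg

theorem IsLadderBlock.length_le_of_append_eq {b c s t : List α} (hb : IsLadderBlock x b)
    (hc : IsLadderBlock x c) (h : b ++ s = c ++ t) : c.length ≤ b.length := by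
  by_contra! hlt
  have hneg := hc.neg b.length hb.length_pos hlt
  rw [← partialSum_append_of_le x hlt.le t, ← h, partialSum_append_length] at hneg
  exact hneg.not_ge hb.sum_nonneg

theorem IsLadderDecomposition.unique {r : List α} {L L' : List (List α)} {l l' : List α}
    (h : IsLadderDecomposition x r L l) (h' : IsLadderDecomposition x r L' l') :
    L = L' ∧ l = l' := by
  obtain ⟨hL, hl, rfl⟩ := h
  obtain ⟨hL', hl', heq⟩ := h'
  induction L generalizing L' with
  | nil =>
    cases L' with
    | nil => simpa using heq
    | cons b' L' =>
      simp only [List.flatten_nil, List.nil_append, List.flatten_cons, List.append_assoc] at heq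
      exact absurd (heq ▸ hl) ((hL' b' (by simp)).not_isNegativeWalk_append _)
  | cons b L ih =>
    simp only [List.flatten_cons, List.append_assoc] at heq
    rw [List.forall_mem_cons] at hL
    cases L' with
    | nil =>
      rw [List.flatten_nil, List.nil_append] at heq
      exact absurd (heq ▸ hl') (hL.1.not_isNegativeWalk_append _)
    | cons b' L' =>
      simp only [List.flatten_cons, List.append_assoc] at heq
      rw [List.forall_mem_cons] at hL'
      obtain ⟨rfl, htail⟩ := List.append_inj heq
        ((hL'.1.length_le_of_append_eq hL.1 heq.symm).antisymm
          (hL.1.length_le_of_append_eq hL'.1 heq))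
      obtain ⟨rfl, rfl⟩ := ih hL.2 hL'.2 htail
      exact ⟨rfl, rfl⟩

theorem IsLadderDecomposition.reverse {r : List α} {L : List (List α)} {l : List α}
    (h : IsLadderDecomposition x r L l) :
    IsLadderDecomposition x (L.reverse.flatten ++ l) L.reverse l where
  isLadderBlock b hb := h.isLadderBlock b (List.mem_reverse.1 hb)
  isNegativeWalk := h.isNegativeWalk
  eq_append := rfl

theorem exists_isLadderReversal (x : α → M) (r : List α) : ∃ s, IsLadderReversal x r s :=
  have ⟨L, l, h⟩ := exists_isLadderDecomposition x r
  ⟨_, L, l, h, rfl⟩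

theorem IsLadderReversal.perm {r s : List α} (h : IsLadderReversal x r s) : s.Perm r := by
  obtain ⟨L, l, h, rfl⟩ := h
  exact h.eq_append ▸ L.reverse_perm.flatten.append_right l

theorem IsLadderReversal.left_unique {r r' s : List α} (h : IsLadderReversal x r s)
    (h' : IsLadderReversal x r' s) : r = r' := by
  obtain ⟨L, l, h, rfl⟩ := h
  obtain ⟨L', l', h', heq⟩ := h'
  obtain ⟨hL, rfl⟩ := h.reverse.unique (heq ▸ h'.reverse)
  rw [h.eq_append, h'.eq_append, List.reverse_injective hL]

theorem IsNegativeWalk.isRecord_iff {l : List α} (hl : IsNegativeWalk x l) {t : ℕ}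
    (ht : t ≤ l.length) : IsRecord (partialSum x l) t ↔ t = 0 := by
  refine ⟨fun h => ?_, fun h => h ▸ isRecord_zero _⟩
  by_contra hne
  have hnonneg : 0 ≤ partialSum x l t := by simpa using h 0 t.zero_le
  exact (hl t (Nat.pos_of_ne_zero hne) ht).not_ge hnonneg

theorem IsLadderBlock.isRecord_append_iff_of_lt {b : List α} (hb : IsLadderBlock x b)
    (s : List α) {t : ℕ} (ht : t < b.length) :
    IsRecord (partialSum x (b ++ s)) t ↔ t = 0 := by
  refine ⟨fun h => ?_, fun h => h ▸ isRecord_zero _⟩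
  by_contra hne
  have hnonneg : 0 ≤ partialSum x b t := by
    simpa [partialSum_append_of_le x ht.le] using h 0 t.zero_le
  exact (hb.neg t (Nat.pos_of_ne_zero hne) ht).not_ge hnonneg

end Ladder

section LadderRecords

variable {α M : Type*} [AddCommGroup M] [LinearOrder M] [IsOrderedAddMonoid M] {x : α → M}

theorem IsLadderBlock.isRecord_append_iff {b : List α} (hb : IsLadderBlock x b) (s : List α)
    (t : ℕ) :
    IsRecord (partialSum x (b ++ s)) (b.length + t) ↔ IsRecord (partialSum x s) t := by
  constructor <;> intro h i hi
  · simpa only [partialSum_append_length_add, add_le_add_iff_left] using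
      h (b.length + i) (Nat.add_le_add_left hi _)
  · rw [partialSum_append_length_add]
    rcases lt_or_ge i b.length with hlt | hge
    · have hb_nonpos : partialSum x b i ≤ 0 := by
        rcases i.eq_zero_or_pos with rfl | hpos
        · rw [partialSum_zero]
        · exact (hb.neg i hpos hlt).le
      have hs_nonneg : 0 ≤ partialSum x s t := by simpa using h 0 t.zero_le
      rw [partialSum_append_of_le x hlt.le]
      exact hb_nonpos.trans (add_nonneg hb.sum_nonneg hs_nonneg)
    · obtain ⟨k, rfl⟩ := Nat.exists_eq_add_of_le hge
      rw [partialSum_append_length_add]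
      exact add_le_add_right (h k (Nat.le_of_add_le_add_left hi)) _

theorem IsLadderDecomposition.isRecord_iff {r : List α} {L : List (List α)} {l : List α}
    (h : IsLadderDecomposition x r L l) {t : ℕ} (ht : t ≤ r.length) :
    IsRecord (partialSum x r) t ↔ ∃ L', L' <+: L ∧ L'.flatten.length = t := by
  obtain ⟨hL, hl, rfl⟩ := h
  induction L generalizing t with
  | nil => simpa [eq_comm] using hl.isRecord_iff ht
  | cons b L ih =>
    rw [List.forall_mem_cons] at hL
    obtain ⟨hb, hL⟩ := hL
    simp only [List.flatten_cons, List.append_assoc, List.length_append, List.prefix_cons_iff,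
      or_and_right, exists_or, exists_eq_left, List.flatten_nil, List.length_nil] at ht ih ⊢
    rcases lt_or_ge t b.length with hlt | hge
    · rw [hb.isRecord_append_iff_of_lt _ hlt, eq_comm, or_iff_left]
      rintro ⟨_, ⟨L', rfl, -⟩, rfl⟩
      simp at hlt
    · obtain ⟨s, rfl⟩ := Nat.exists_eq_add_of_le hge
      have hpos := hb.length_pos
      rw [hb.isRecord_append_iff, ih hL (by lia), or_iff_right (by lia)]
      constructor
      · rintro ⟨L', hL', rfl⟩
        exact ⟨b :: L', ⟨L', rfl, hL'⟩, by simp⟩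
      · rintro ⟨_, ⟨L', rfl, hL'⟩, hlen⟩
        exact ⟨L', hL', by simpa using hlen⟩

theorem IsLadderDecomposition.partialSum_le {r : List α} {L : List (List α)} {l : List α}
    (h : IsLadderDecomposition x r L l) {i : ℕ} (hi : i ≤ r.length) :
    partialSum x r i ≤ partialSum x r L.flatten.length := by
  have hle : L.flatten.length ≤ r.length := by simp [h.eq_append]
  have hrec := (h.isRecord_iff hle).2 ⟨L, List.prefix_rfl, rfl⟩
  rcases le_or_gt i L.flatten.length with hiL | hLi
  · exact hrec i hiL
  · obtain ⟨k, rfl⟩ := Nat.exists_eq_add_of_lt hLi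
    have hneg := h.isNegativeWalk (k + 1) k.succ_pos (by simp [h.eq_append] at hi; lia)
    rw [h.eq_append, add_assoc, partialSum_append_length_add, partialSum_append_length]
    exact add_le_of_nonpos_right hneg.le

theorem IsLadderDecomposition.isRecord_reverse {r : List α} {L : List (List α)} {l : List α}
    (h : IsLadderDecomposition x r L l) {t : ℕ} (ht : t ≤ L.flatten.length)
    (hrec : IsRecord (partialSum x r) t) :
    IsRecord (partialSum x (L.reverse.flatten ++ l)) (L.flatten.length - t) ∧
      partialSum x (L.reverse.flatten ++ l) (L.flatten.length - t) =
        partialSum x r L.flatten.length - partialSum x r t := by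
  have hle : t ≤ r.length := ht.trans (by simp [h.eq_append])
  obtain ⟨L₁, ⟨L₂, rfl⟩, rfl⟩ := (h.isRecord_iff hle).1 hrec
  have hperm : L₂.reverse.flatten.Perm L₂.flatten := L₂.reverse_perm.flatten
  have htime : (L₁ ++ L₂).flatten.length - L₁.flatten.length = L₂.reverse.flatten.length := by
    rw [hperm.length_eq, List.flatten_append, List.length_append, Nat.add_sub_cancel_left]
  rw [htime]
  constructor
  · rw [h.reverse.isRecord_iff (by simp)]
    exact ⟨L₂.reverse, by simp, rfl⟩
  · rw [h.eq_append, partialSum_append_length, List.reverse_append]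
    simp only [List.flatten_append, List.append_assoc, partialSum_append_length, List.map_append,
      List.sum_append, (hperm.map x).sum_eq, add_sub_cancel_left]

theorem IsLadderDecomposition.reversesRecords {r : List α} {L : List (List α)} {l : List α}
    (h : IsLadderDecomposition x r L l) :
    ReversesRecords L.flatten.length (partialSum x r)
      (partialSum x (L.reverse.flatten ++ l)) where
  isRecord_iff t ht := by
    refine ⟨fun hrec => ?_, fun hrec => (h.isRecord_reverse ht hrec).1⟩
    have hlen : L.reverse.flatten.length = L.flatten.length := L.reverse_perm.flatten.length_eq
    have hback := (h.reverse.isRecord_reverse (hlen ▸ Nat.sub_le _ t) hrec).1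
    rwa [List.reverse_reverse, ← h.eq_append, hlen, Nat.sub_sub_self ht] at hback
  apply_sub _ ht hrec := (h.isRecord_reverse ht hrec).2

theorem IsLadderDecomposition.maxIdx_eq {x : α → ℝ} {r : List α} {L : List (List α)} {l : List α}
    (h : IsLadderDecomposition x r L l) (hr : InjOn (partialSum x r) (Iic r.length)) :
    maxIdx r.length (partialSum x r) = L.flatten.length :=
  maxIdx_eq_of_forall_le hr (by simp [h.eq_append]) fun _ => h.partialSum_le

theorem IsLadderReversal.maxIdx_eq {x : α → ℝ} {r s : List α} (h : IsLadderReversal x r s)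
    (hr : InjOn (partialSum x r) (Iic r.length)) (hs : InjOn (partialSum x s) (Iic s.length)) :
    maxIdx s.length (partialSum x s) = maxIdx r.length (partialSum x r) := by
  obtain ⟨L, l, h, rfl⟩ := h
  rw [h.reverse.maxIdx_eq hs, h.maxIdx_eq hr, L.reverse_perm.flatten.length_eq]

theorem IsLadderReversal.reversesRecords {x : α → ℝ} {r s : List α} (h : IsLadderReversal x r s)
    (hr : InjOn (partialSum x r) (Iic r.length)) :
    ReversesRecords (maxIdx r.length (partialSum x r)) (partialSum x r) (partialSum x s) := by
  obtain ⟨L, l, h, rfl⟩ := h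
  rw [h.maxIdx_eq hr]
  exact h.reversesRecords

theorem IsLadderReversal.maxAtDVec_eq {x : α → ℝ} {r s : List α} (h : IsLadderReversal x r s)
    (hr : InjOn (partialSum x r) (Iic r.length)) (hs : InjOn (partialSum x s) (Iic s.length)) :
    maxAtDVec s.length (partialSum x s) =
      postMinVec r.length (timeReversal r.length (partialSum x r)) := by
  rw [h.perm.length_eq]
  refine (h.reversesRecords hr).maxAtDVec_eq ?_ hr
  rw [← h.perm.length_eq, h.maxIdx_eq hr hs, h.perm.length_eq]

end LadderRecords

section Permutation

variable {n : ℕ}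

theorem exists_perm_ofFn_eq (σ : Equiv.Perm (Fin n)) {r : List (Fin n)}
    (hr : r.Perm (List.ofFn σ)) : ∃ τ : Equiv.Perm (Fin n), List.ofFn τ = r := by
  have hlen : r.length = n := by simpa using hr.length_eq
  obtain ⟨f, rfl⟩ : ∃ f : Fin n → Fin n, List.ofFn f = r :=
    ⟨r.get ∘ Fin.cast hlen.symm, List.ext_getElem (by simp [hlen]) (by simp)⟩
  have hinj : Function.Injective f :=
    List.nodup_ofFn.1 (hr.nodup_iff.2 (List.nodup_ofFn.2 σ.injective))
  exact ⟨Equiv.ofBijective f (Finite.injective_iff_bijective.1 hinj), rfl⟩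

theorem exists_perm_isLadderReversal {M : Type*} [AddMonoid M] [LinearOrder M] (x : Fin n → M) :
    ∃ Ψ : Equiv.Perm (Equiv.Perm (Fin n)),
      ∀ σ : Equiv.Perm (Fin n), IsLadderReversal x (List.ofFn σ) (List.ofFn (Ψ σ)) := by
  have hex (σ : Equiv.Perm (Fin n)) :
      ∃ τ : Equiv.Perm (Fin n), IsLadderReversal x (List.ofFn σ) (List.ofFn τ) := by
    obtain ⟨s, hs⟩ := exists_isLadderReversal x (List.ofFn σ)
    obtain ⟨τ, rfl⟩ := exists_perm_ofFn_eq σ hs.perm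
    exact ⟨τ, hs⟩
  choose Ψ hΨ using hex
  have hinj : Function.Injective Ψ := fun σ τ h =>
    DFunLike.coe_injective (List.ofFn_injective ((hΨ σ).left_unique (h ▸ hΨ τ)))
  exact ⟨Equiv.ofBijective Ψ (Finite.injective_iff_bijective.1 hinj), hΨ⟩

theorem pathOf_eq_partialSum (x : Fin n → ℝ) (σ : Equiv.Perm (Fin n)) :
    pathOf n x σ = partialSum x (List.ofFn σ) := by
  funext j
  simp [pathOf, partialSum, List.map_take, List.map_ofFn, List.sum_take_ofFn]

theorem pathOf_mul_revPerm (x : Fin n → ℝ) (σ : Equiv.Perm (Fin n)) :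
    pathOf n x (σ * Fin.revPerm) = timeReversal n (pathOf n x σ) := by
  have hofFn : List.ofFn (σ * Fin.revPerm : Equiv.Perm (Fin n)) = (List.ofFn σ).reverse := by
    apply List.ext_getElem <;> simp [Fin.ext_iff, Nat.sub_sub, add_comm]
  rw [pathOf_eq_partialSum, hofFn, partialSum_reverse, List.length_ofFn, pathOf_eq_partialSum]

theorem injOn_pathOf {x : Fin n → ℝ} (hx : ∀ I : Finset (Fin n), I.Nonempty → ∑ i ∈ I, x i ≠ 0)
    (σ : Equiv.Perm (Fin n)) : InjOn (pathOf n x σ) (Iic n) := by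
  have hne {i j : ℕ} (hij : i < j) (hj : j ≤ n) : pathOf n x σ i ≠ pathOf n x σ j := fun h => by
    let steps (k : ℕ) : Finset (Fin n) := {a | (a : ℕ) < k}
    have hsub : steps i ⊆ steps j := Finset.monotone_filter_right _ fun a _ ha => ha.trans hij
    refine hx ((steps j \ steps i).map σ.toEmbedding) ⟨σ ⟨i, hij.trans_le hj⟩, ?_⟩ ?_
    · simpa [steps] using hij
    · rw [Finset.sum_map, Finset.sum_sdiff_eq_sub hsub]
      exact sub_eq_zero.2 h.symm
  intro i hi j hj h
  rcases lt_trichotomy i j with hij | rfl | hji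
  · exact absurd h (hne hij hj)
  · rfl
  · exact absurd h.symm (hne hji hi)

theorem exists_perm_maxAtDVec_eq_postMinVec {x : Fin n → ℝ}
    (hx : ∀ I : Finset (Fin n), I.Nonempty → ∑ i ∈ I, x i ≠ 0) :
    ∃ Φ : Equiv.Perm (Equiv.Perm (Fin n)), ∀ σ,
      maxIdx n (pathOf n x (Φ σ)) = n - minIdx n (pathOf n x σ) ∧
        maxAtDVec n (pathOf n x (Φ σ)) = postMinVec n (pathOf n x σ) := by
  obtain ⟨Ψ, hΨ⟩ := exists_perm_isLadderReversal x
  refine ⟨(Equiv.mulRight Fin.revPerm).symm.trans Ψ, fun σ => ?_⟩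
  obtain ⟨τ, rfl⟩ := (Equiv.mulRight Fin.revPerm).surjective σ
  have hinj (σ : Equiv.Perm (Fin n)) :
      InjOn (partialSum x (List.ofFn σ)) (Iic (List.ofFn σ).length) := by
    simpa [← pathOf_eq_partialSum] using injOn_pathOf hx σ
  have hmax := (hΨ τ).maxIdx_eq (hinj _) (hinj _)
  have hvec := (hΨ τ).maxAtDVec_eq (hinj _) (hinj _)
  simp only [List.length_ofFn, ← pathOf_eq_partialSum] at hmax hvec
  rw [Equiv.trans_apply, Equiv.symm_apply_apply, Equiv.coe_mulRight, pathOf_mul_revPerm, hmax,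
    hvec, minIdx_timeReversal (injOn_pathOf hx τ),
    Nat.sub_sub_self (maxIdx_spec (injOn_pathOf hx τ)).1]
  exact ⟨rfl, rfl⟩

end Permutation

section Uniform

variable {Ω α : Type*} [MeasurableSpace Ω] [Fintype α] {P : Measure Ω} {f : Ω → α}

-- `f` need not be measurable: `P` is merely subadditive on the sets `f ⁻¹' S`, but the bounds for
-- `S` and for its complement add up to the total mass, so neither can be strict.
theorem measure_preimage_finset_eq_sum [IsFiniteMeasure P]
    (hf : ∑ a, P (f ⁻¹' {a}) = P univ) (S : Finset α) :
    P (f ⁻¹' S) = ∑ a ∈ S, P (f ⁻¹' {a}) := by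
  classical
  have hle (T : Finset α) : P (f ⁻¹' T) ≤ ∑ a ∈ T, P (f ⁻¹' {a}) := by
    rw [← Finset.set_biUnion_preimage_singleton]
    exact measure_biUnion_finset_le T _
  refine (hle S).antisymm ((ENNReal.add_le_add_iff_right (a := ∑ a ∈ Sᶜ, P (f ⁻¹' {a})) ?_).1 ?_)
  · exact ENNReal.sum_ne_top.2 fun a _ => measure_ne_top P _
  · calc ∑ a ∈ S, P (f ⁻¹' {a}) + ∑ a ∈ Sᶜ, P (f ⁻¹' {a})
      _ = P univ := by rw [Finset.sum_add_sum_compl, hf]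
      _ ≤ P (f ⁻¹' S) + P (f ⁻¹' Sᶜ) := by
        rw [← union_compl_self (f ⁻¹' S), preimage_compl]
        exact measure_union_le _ _
      _ ≤ P (f ⁻¹' S) + ∑ a ∈ Sᶜ, P (f ⁻¹' {a}) := by
        gcongr
        simpa using hle Sᶜ

theorem measure_setOf_comp_equiv_eq [IsProbabilityMeasure P]
    (hf : ∀ a, P {ω | f ω = a} = (Fintype.card α : ℝ≥0∞)⁻¹) (e : α ≃ α) (p : α → Prop) :
    P {ω | p (e (f ω))} = P {ω | p (f ω)} := by
  classical
  have : Nonempty α := (nonempty_of_isProbabilityMeasure P).map f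
  have hsum : ∑ a, P (f ⁻¹' {a}) = P univ := by
    simp only [preimage, mem_singleton_iff, hf, Finset.sum_const, Finset.card_univ, nsmul_eq_mul,
      measure_univ]
    exact ENNReal.mul_inv_cancel (by simp) (by simp)
  have hcount (q : α → Prop) :
      P {ω | q (f ω)} = (Finset.univ.filter q).card * (Fintype.card α : ℝ≥0∞)⁻¹ := by
    have h := measure_preimage_finset_eq_sum hsum (Finset.univ.filter q)
    simpa [preimage, hf] using h
  have hcard : (Finset.univ.filter fun a => p (e a)).card = (Finset.univ.filter p).card :=
    Finset.card_equiv e (by simp)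
  rw [hcount fun a => p (e a), hcount p, hcard]

end Uniform

theorem stmt11_general {Ω : Type*} [MeasurableSpace Ω] (P : Measure Ω) [IsProbabilityMeasure P]
    (n : ℕ) (x : Fin n → ℝ) (hx : ∀ I : Finset (Fin n), I.Nonempty → ∑ i ∈ I, x i ≠ 0)
    (π : Ω → Equiv.Perm (Fin n))
    (hπ : ∀ σ : Equiv.Perm (Fin n), P {ω | π ω = σ} = ((Nat.factorial n : ℝ≥0∞))⁻¹) :
    (∀ ω : Ω,
      (∃! j : ℕ, j ≤ n ∧ ∀ i ≤ n, pathOf n x (π ω) j ≤ pathOf n x (π ω) i) ∧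
      (∃! j : ℕ, j ≤ n ∧ ∀ i ≤ n, pathOf n x (π ω) i ≤ pathOf n x (π ω) j)) ∧
    (∀ (m : ℕ) (v : ℕ → ℝ),
      P {ω | n - minIdx n (pathOf n x (π ω)) = m ∧
              postMinVec n (pathOf n x (π ω)) = v} =
      P {ω | maxIdx n (pathOf n x (π ω)) = m ∧
              maxAtDVec n (pathOf n x (π ω)) = v}) := by
  refine ⟨fun ω => ⟨existsUnique_forall_le_of_injOn (injOn_pathOf hx _),
    existsUnique_forall_ge_of_injOn (injOn_pathOf hx _)⟩, fun m v => ?_⟩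
  obtain ⟨Φ, hΦ⟩ := exists_perm_maxAtDVec_eq_postMinVec hx
  have huniform : ∀ σ, P {ω | π ω = σ} = (Fintype.card (Equiv.Perm (Fin n)) : ℝ≥0∞)⁻¹ := by
    simpa [Fintype.card_perm] using hπ
  simpa only [hΦ] using measure_setOf_comp_equiv_eq huniform Φ fun σ =>
    maxIdx n (pathOf n x σ) = m ∧ maxAtDVec n (pathOf n x σ) = v

/-- if `x` has the different-subset-sum property and `π` is a uniform
random permutation, then the step process `X_t = Σ_{i ≤ ⌊nt⌋} x_{π(i)}` attains its
minimum and maximum over `[0,1]` at unique (grid) times `ρ = nρ/n` and `η = nη/n`, and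
the random vectors `(X̲̲_{ρ+j/n} − X̲̲_ρ)_{0 ≤ j ≤ n−nρ}` and `(X̄_{d(j/n)})_{0 ≤ j ≤ nη}`
(recorded together with their lengths) have the same distribution. -/
theorem stmt11
    {Ω : Type*} [MeasurableSpace Ω] (P : Measure Ω) [IsProbabilityMeasure P]
    (n : ℕ) (hn : 0 < n) (x : Fin n → ℝ)
    -- different subset sums
    (hx : ∀ I J : Finset (Fin n), I ≠ J → ∑ i ∈ I, x i ≠ ∑ i ∈ J, x i)
    -- π is a uniform random permutation of [n]
    (π : Ω → Equiv.Perm (Fin n))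
    (hπ : ∀ σ : Equiv.Perm (Fin n), P {ω | π ω = σ} = ((Nat.factorial n : ℝ≥0∞))⁻¹) :
    (∀ ω : Ω,
      (∃! j : ℕ, j ≤ n ∧ ∀ i ≤ n, pathOf n x (π ω) j ≤ pathOf n x (π ω) i) ∧
      (∃! j : ℕ, j ≤ n ∧ ∀ i ≤ n, pathOf n x (π ω) i ≤ pathOf n x (π ω) j)) ∧
    (∀ (m : ℕ) (v : ℕ → ℝ),
      P {ω | n - minIdx n (pathOf n x (π ω)) = m ∧
              postMinVec n (pathOf n x (π ω)) = v} =
      P {ω | maxIdx n (pathOf n x (π ω)) = m ∧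
              maxAtDVec n (pathOf n x (π ω)) = v}) :=
  stmt11_general P n x (fun I hI => by simpa using hx I ∅ hI.ne_empty) π hπ
end
end

section
/- Let ν be a nonnegative Borel measure on (0,1] with ∫ x² ν(dx) < ∞, let ν̄(x) = ν((x,1]), and define Ψ(λ) = ∫_{(0,1]} (e^{−λx} − 1 + λx) ν(dx). Suppose there exists α ∈ (1,2) such that lim_{x→0+} x^α ν̄(x) = +∞. Then for every γ ∈ (1,α), lim_{λ→∞} λ^{−γ} Ψ(λ) = +∞. -/
open MeasureTheory Set Filter Topology
open scoped ENNReal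

noncomputable section

/-!
Since `e^{-u} - 1 + u` is nonnegative, and nondecreasing for `u ≥ 0`, Markov's inequality for the
event `{x > 1/λ}` gives `Ψ(λ) ≥ e^{-1} ν̄(1/λ)`. For `λ ≥ 1` and `γ ≤ α` this makes
`λ^{-γ} Ψ(λ)` at least `e^{-1} (1/λ)^α ν̄(1/λ)`, which is the tail hypothesis along `x = 1/λ`.
-/

/-- The compensated exponential `e^{-u} - 1 + u`, the integrand of the compensated Laplace
exponent at `u = λx`. -/
def compensatedExp (u : ℝ) : ℝ := Real.exp (-u) - 1 + u

/-- The compensated Laplace exponent `Ψ(λ)` of a measure on the whole line; a measure carried by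
`(0, 1]` enters through its restriction. It takes the junk value `0` where the integrand is not
integrable. -/
def compensatedLaplaceExponent (ν : Measure ℝ) (lam : ℝ) : ℝ :=
  ∫ x, compensatedExp (lam * x) ∂ν

lemma compensatedExp_nonneg (u : ℝ) : 0 ≤ compensatedExp u := by
  unfold compensatedExp
  linarith [Real.one_sub_le_exp_neg u]

lemma compensatedExp_pos {u : ℝ} (hu : u ≠ 0) : 0 < compensatedExp u := by
  unfold compensatedExp
  linarith [Real.add_one_lt_exp (neg_ne_zero.mpr hu)]

lemma monotoneOn_compensatedExp : MonotoneOn compensatedExp (Ici 0) := by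
  intro u (hu : 0 ≤ u) v _ huv
  have exp_neg_le_one : Real.exp (-u) ≤ 1 := Real.exp_le_one_iff.mpr (neg_nonpos.mpr hu)
  have tangent : Real.exp (-u) * (1 - (v - u)) ≤ Real.exp (-v) :=
    calc Real.exp (-u) * (1 - (v - u)) ≤ Real.exp (-u) * Real.exp (-(v - u)) := by
          gcongr
          exact Real.one_sub_le_exp_neg _
      _ = Real.exp (-v) := by
          rw [← Real.exp_add]
          congr 1
          ring
  unfold compensatedExp
  linarith [mul_nonneg (sub_nonneg.mpr huv) (sub_nonneg.mpr exp_neg_le_one)]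

lemma compensatedExp_le_sq_div_two {u : ℝ} (hu : 0 ≤ u) : compensatedExp u ≤ u ^ 2 / 2 := by
  have one_le : 1 ≤ (1 - u + u ^ 2 / 2) * Real.exp u :=
    calc (1 : ℝ) ≤ 1 + u ^ 4 / 4 := by linarith [pow_nonneg hu 4]
      _ = (1 - u + u ^ 2 / 2) * (1 + u + u ^ 2 / 2) := by ring
      _ ≤ (1 - u + u ^ 2 / 2) * Real.exp u := by
          gcongr
          · linarith [sq_nonneg (u - 1)]
          · exact Real.quadratic_le_exp_of_nonneg hu
  have exp_neg_le : Real.exp (-u) ≤ 1 - u + u ^ 2 / 2 := by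
    rwa [Real.exp_neg, inv_le_iff_one_le_mul₀ (Real.exp_pos u)]
  unfold compensatedExp
  linarith

lemma measurable_compensatedExp : Measurable compensatedExp := by
  unfold compensatedExp
  fun_prop

lemma measureReal_restrict_Ioc_Ioi (ν : Measure ℝ) {a b x : ℝ} (hax : a ≤ x) :
    (ν.restrict (Ioc a b)).real (Ioi x) = ν.real (Ioc x b) := by
  rw [measureReal_restrict_apply measurableSet_Ioi, inter_comm, Ioc_inter_Ioi, sup_of_le_right hax]

section LaplaceExponent

variable {ν : Measure ℝ} {lam : ℝ}

lemma integrable_compensatedExp_mul (hν : ∀ᵐ x ∂ν, 0 ≤ x)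
    (hsq : Integrable (fun x : ℝ => x ^ 2) ν) (hlam : 0 ≤ lam) :
    Integrable (fun x => compensatedExp (lam * x)) ν := by
  refine (hsq.const_mul (lam ^ 2 / 2)).mono'
    (measurable_compensatedExp.comp (measurable_const_mul lam)).aestronglyMeasurable ?_
  filter_upwards [hν] with x hx
  calc ‖compensatedExp (lam * x)‖ = compensatedExp (lam * x) :=
        Real.norm_of_nonneg (compensatedExp_nonneg _)
    _ ≤ (lam * x) ^ 2 / 2 := compensatedExp_le_sq_div_two (mul_nonneg hlam hx)
    _ = lam ^ 2 / 2 * x ^ 2 := by ring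

lemma compensatedExp_mul_measureReal_Ioi_le {a : ℝ} (hlam : 0 < lam) (ha : 0 < a)
    (hint : Integrable (fun x => compensatedExp (lam * x)) ν) :
    compensatedExp (lam * a) * ν.real (Ioi a) ≤ compensatedLaplaceExponent ν lam := by
  have hpos : 0 < lam * a := mul_pos hlam ha
  have Ioi_subset : Ioi a ⊆ {x | compensatedExp (lam * a) ≤ compensatedExp (lam * x)} := by
    intro x (hx : a < x)
    have hle : lam * a ≤ lam * x := by gcongr
    exact monotoneOn_compensatedExp hpos.le (hpos.le.trans hle) hle
  calc compensatedExp (lam * a) * ν.real (Ioi a)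
      ≤ compensatedExp (lam * a) *
          ν.real {x | compensatedExp (lam * a) ≤ compensatedExp (lam * x)} :=
        mul_le_mul_of_nonneg_left
          (measureReal_mono Ioi_subset (hint.measure_ge_lt_top (compensatedExp_pos hpos.ne')).ne)
          (compensatedExp_nonneg _)
    _ ≤ compensatedLaplaceExponent ν lam :=
        mul_meas_ge_le_integral_of_nonneg (ae_of_all _ fun _ => compensatedExp_nonneg _) hint _

theorem stmt12_general (hν : ∀ᵐ x ∂ν, 0 ≤ x) (hmom : ∫⁻ x, ENNReal.ofReal (x ^ 2) ∂ν < ⊤)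
    {α γ : ℝ} (hγα : γ ≤ α)
    (htail : Tendsto (fun x : ℝ => x ^ α * ν.real (Ioi x)) (𝓝[>] 0) atTop) :
    Tendsto (fun lam : ℝ => compensatedLaplaceExponent ν lam / lam ^ γ) atTop atTop := by
  have hsq : Integrable (fun x : ℝ => x ^ 2) ν :=
    ⟨by fun_prop, (hasFiniteIntegral_iff_ofReal (ae_of_all _ sq_nonneg)).mpr hmom⟩
  refine tendsto_atTop_mono' _ ?_
    ((htail.comp tendsto_inv_atTop_nhdsGT_zero).const_mul_atTop (compensatedExp_pos one_ne_zero))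
  filter_upwards [eventually_ge_atTop (1 : ℝ)] with lam hlam
  have hlam0 : 0 < lam := one_pos.trans_le hlam
  have markov : compensatedExp 1 * ν.real (Ioi lam⁻¹) ≤ compensatedLaplaceExponent ν lam := by
    simpa only [mul_inv_cancel₀ hlam0.ne'] using
      compensatedExp_mul_measureReal_Ioi_le hlam0 (inv_pos.mpr hlam0)
        (integrable_compensatedExp_mul hν hsq hlam0.le)
  calc compensatedExp 1 * (lam⁻¹ ^ α * ν.real (Ioi lam⁻¹))
      = compensatedExp 1 * ν.real (Ioi lam⁻¹) / lam ^ α := by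
        rw [Real.inv_rpow hlam0.le]
        ring
    _ ≤ compensatedExp 1 * ν.real (Ioi lam⁻¹) / lam ^ γ := by
        have := compensatedExp_nonneg 1
        gcongr
    _ ≤ compensatedLaplaceExponent ν lam / lam ^ γ := by gcongr

end LaplaceExponent

/-- if `ν` is a measure on `(0,1]` with finite second moment whose tail
`ν̄(x) = ν((x,1])` satisfies `x^α ν̄(x) → ∞` as `x → 0+` for some `α ∈ (1,2)`, then the
compensated Laplace exponent `Ψ(λ) = ∫ (e^{−λx} − 1 + λx) ν(dx)` satisfies
`λ^{−γ} Ψ(λ) → ∞` for every `γ ∈ (1,α)`. -/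
theorem stmt12
    (ν : Measure ℝ)
    (hsupp : ν (Set.Ioc (0:ℝ) 1)ᶜ = 0)
    (hmom : ∫⁻ x in Set.Ioc (0:ℝ) 1, ENNReal.ofReal (x ^ 2) ∂ν < ⊤)
    (α : ℝ) (hα1 : 1 < α) (hα2 : α < 2)
    (htail : Tendsto (fun x : ℝ => x ^ α * (ν (Set.Ioc x 1)).toReal)
      (𝓝[>] (0:ℝ)) atTop) :
    ∀ γ : ℝ, 1 < γ → γ < α →
      Tendsto (fun lam : ℝ =>
          (∫ x in Set.Ioc (0:ℝ) 1, (Real.exp (-(lam * x)) - 1 + lam * x) ∂ν) / lam ^ γ)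
        atTop atTop :=
  fun _ _ hγα => stmt12_general
    (ae_restrict_of_forall_mem measurableSet_Ioc fun _ hx => hx.1.le) hmom hγα.le <|
    htail.congr' <| eventually_mem_nhdsWithin.mono fun x hx =>
      congrArg (x ^ α * ·) (measureReal_restrict_Ioc_Ioi ν (mem_Ioi.mp hx).le).symm
end
end

section
/- Let f_n, f : [0,∞) → [0,∞) be càdlàg functions such that f has only nonnegative jumps, and suppose there exist increasing homeomorphisms α_n : [0,1] → [0,1] with sup_{s∈[0,1]} |f_n(α_n(s)) − f(s)| → 0 and sup_{s∈[0,1]} |α_n(s) − s| → 0. Let T > 0 and let c_n, c : [0,T] → [0,1] with c continuous and c_n → c uniformly on [0,T]. Then for every t ∈ [0,T], f(c(t)−) ≤ liminf_n f_n(c_n(t)) ≤ limsup_n f_n(c_n(t)) ≤ f(c(t)), where f(x−) denotes the left limit of f at x > 0 and f(0−) := f(0). -/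
open Set Filter Topology

/-!
A càdlàg function with nonnegative jumps is upper semicontinuous, and its values near `x` are
asymptotically at least the left limit at `x`. If `α n` is onto, a point `u n` close to `x` is the
image `α n (s n)` of a point `s n` which is again close to `x`, and `fn n (u n) = fn n (α n (s n))`
is close to `f (s n)`; hence `fn n (u n)` obeys asymptotically the same two bounds as `f (s n)`.
-/

open scoped Uniformity

section LeftLimit

-- For `x ≤ a` the filter `𝓝[S ∩ Iio x] x` is `⊥`, so no left limit is required there.
theorem tendsto_nhdsWithin_inter_Iio_of_subset_Ici {X Y : Type*} [Preorder X]
    [TopologicalSpace X] {f : X → Y} {l : Filter Y} {S : Set X} {a x : X} (hS : S ⊆ Ici a)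
    (hf : a < x → Tendsto f (𝓝[<] x) l) :
    Tendsto f (𝓝[S ∩ Iio x] x) l := by
  rcases (S ∩ Iio x).eq_empty_or_nonempty with hempty | ⟨s, hsS, hsx⟩
  · simp only [hempty, nhdsWithin_empty, tendsto_bot]
  · exact (hf ((hS hsS).trans_lt hsx)).mono_left (nhdsWithin_mono x inter_subset_right)

variable {X Y : Type*} [LinearOrder X] [TopologicalSpace X]

theorem eventually_nhdsWithin_of_inter_Iio_of_inter_Ici {P : X → Prop} {S : Set X} {x : X}
    (hlt : ∀ᶠ s in 𝓝[S ∩ Iio x] x, P s) (hge : ∀ᶠ s in 𝓝[S ∩ Ici x] x, P s) :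
    ∀ᶠ s in 𝓝[S] x, P s := by
  rw [← inter_univ S, ← Iio_union_Ici (a := x), inter_union_distrib_left, nhdsWithin_union]
  exact eventually_sup.2 ⟨hlt, hge⟩

variable [LinearOrder Y] [TopologicalSpace Y] [OrderClosedTopology Y]
  {f : X → Y} {S : Set X} {x : X} {L : Y}

theorem upperSemicontinuousWithinAt_of_tendsto_left_of_le
    (hright : ContinuousWithinAt f (S ∩ Ici x) x) (hleft : Tendsto f (𝓝[S ∩ Iio x] x) (𝓝 L))
    (hL : L ≤ f x) : UpperSemicontinuousWithinAt f S x := fun _b hb =>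
  eventually_nhdsWithin_of_inter_Iio_of_inter_Ici
    (hleft.eventually_lt_const (hL.trans_lt hb)) (hright.eventually_lt_const hb)

theorem eventually_const_lt_of_tendsto_left_of_le
    (hright : ContinuousWithinAt f (S ∩ Ici x) x) (hleft : Tendsto f (𝓝[S ∩ Iio x] x) (𝓝 L))
    (hL : L ≤ f x) {a : Y} (ha : a < L) : ∀ᶠ s in 𝓝[S] x, a < f s :=
  eventually_nhdsWithin_of_inter_Iio_of_inter_Ici
    (hleft.eventually_const_lt ha) (hright.eventually_const_lt (ha.trans_le hL))

end LeftLimit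

section UniformlyClose

variable {ι : Type*} {p : Filter ι} {y z : ι → ℝ} {B : ℝ}

theorem eventually_lt_of_tendsto_uniformity (hyz : Tendsto (fun n => (y n, z n)) p (𝓤 ℝ))
    (hy : ∀ b > B, ∀ᶠ n in p, y n < b) : ∀ b > B, ∀ᶠ n in p, z n < b := by
  intro b hb
  obtain ⟨m, hBm, hmb⟩ := exists_between hb
  filter_upwards [hy m hBm, hyz (Metric.dist_mem_uniformity (sub_pos.2 hmb))] with n hym hclose
  have hclose : |y n - z n| < b - m := hclose
  linarith [(abs_lt.1 hclose).1]

theorem eventually_gt_of_tendsto_uniformity (hyz : Tendsto (fun n => (y n, z n)) p (𝓤 ℝ))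
    (hy : ∀ a < B, ∀ᶠ n in p, a < y n) : ∀ a < B, ∀ᶠ n in p, a < z n := by
  intro a ha
  obtain ⟨m, ham, hmB⟩ := exists_between ha
  filter_upwards [hy m hmB, hyz (Metric.dist_mem_uniformity (sub_pos.2 ham))] with n hym hclose
  have hclose : |y n - z n| < m - a := hclose
  linarith [(abs_lt.1 hclose).2]

end UniformlyClose

theorem liminf_limsup_bounds_of_eventually {ι : Type*} {p : Filter ι} [p.NeBot] {z : ι → ℝ}
    {A B : ℝ} (hA : ∀ a < A, ∀ᶠ n in p, a < z n) (hB : ∀ b > B, ∀ᶠ n in p, z n < b) :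
    A ≤ liminf z p ∧ liminf z p ≤ limsup z p ∧ limsup z p ≤ B := by
  have hbelow : p.IsBoundedUnder (· ≥ ·) z :=
    isBoundedUnder_of_eventually_ge ((hA (A - 1) (sub_one_lt A)).mono fun _ => le_of_lt)
  have habove : p.IsBoundedUnder (· ≤ ·) z :=
    isBoundedUnder_of_eventually_le ((hB (B + 1) (lt_add_one B)).mono fun _ => le_of_lt)
  exact ⟨(le_liminf_iff habove.isCoboundedUnder_ge hbelow).2 hA, liminf_le_limsup habove hbelow,
    (limsup_le_iff hbelow.isCoboundedUnder_le habove).2 hB⟩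

/-- Skorokhod convergence of `fn` to `f` on `S` along the filter `p`, witnessed by the time changes
`α n`. These are only asked to map onto `S`, instead of being increasing homeomorphisms of `S`, so
that the notion makes sense on any uniform space. -/
structure TendstoSkorokhodOn {ι X Y : Type*} [UniformSpace X] [UniformSpace Y]
    (fn : ι → X → Y) (f : X → Y) (α : ι → X → X) (p : Filter ι) (S : Set X) : Prop where
  surjOn : ∀ n, SurjOn (α n) S S
  tendsto_comp : TendstoUniformlyOn (fun n s => fn n (α n s)) f p S
  tendsto_timeChange : TendstoUniformlyOn α id p S

namespace TendstoSkorokhodOn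

theorem of_forall_dist_lt {X Y : Type*} [PseudoMetricSpace X] [PseudoMetricSpace Y]
    {fn : ℕ → X → Y} {f : X → Y} {α : ℕ → X → X} {S : Set X} (hα : ∀ n, SurjOn (α n) S S)
    (hconv : ∀ ε > (0 : ℝ), ∃ N : ℕ, ∀ n ≥ N, ∀ s ∈ S,
      dist (fn n (α n s)) (f s) < ε ∧ dist (α n s) s < ε) :
    TendstoSkorokhodOn fn f α atTop S where
  surjOn := hα
  tendsto_comp := Metric.tendstoUniformlyOn_iff.2 fun ε hε =>
    eventually_atTop.2 <| (hconv ε hε).imp fun _N hN n hn s hs =>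
      (dist_comm _ _).trans_lt (hN n hn s hs).1
  tendsto_timeChange := Metric.tendstoUniformlyOn_iff.2 fun ε hε =>
    eventually_atTop.2 <| (hconv ε hε).imp fun _N hN n hn s hs =>
      (dist_comm _ _).trans_lt (hN n hn s hs).2

theorem exists_tendsto_nhdsWithin {ι X Y : Type*} [UniformSpace X] [UniformSpace Y]
    {fn : ι → X → Y} {f : X → Y} {α : ι → X → X} {p : Filter ι} {S : Set X}
    (h : TendstoSkorokhodOn fn f α p S) {u : ι → X} {x : X} (huS : ∀ n, u n ∈ S)
    (hu : Tendsto u p (𝓝 x)) :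
    ∃ s : ι → X, Tendsto s p (𝓝[S] x) ∧
      Tendsto (fun n => (f (s n), fn n (u n))) p (𝓤 Y) := by
  choose s hsS hαs using fun n => h.surjOn n (huS n)
  have hs : Tendsto (fun n => (n, s n)) p (p ×ˢ 𝓟 S) :=
    tendsto_id.prodMk (tendsto_principal.2 (.of_forall hsS))
  have hsu : Tendsto (fun n => (s n, u n)) p (𝓤 X) := by
    simpa only [Function.comp_def, id, hαs] using
      (tendstoUniformlyOn_iff_tendsto.1 h.tendsto_timeChange).comp hs
  have hfs : Tendsto (fun n => (f (s n), fn n (u n))) p (𝓤 Y) := by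
    simpa only [Function.comp_def, hαs] using
      (tendstoUniformlyOn_iff_tendsto.1 h.tendsto_comp).comp hs
  exact ⟨s, tendsto_nhdsWithin_iff.2 ⟨hu.congr_uniformity (tendsto_swap_uniformity.comp hsu),
    .of_forall hsS⟩, hfs⟩

end TendstoSkorokhodOn

theorem surjOn_Icc_self_of_continuousOn {X : Type*} [ConditionallyCompleteLinearOrder X]
    [TopologicalSpace X] [OrderTopology X] [DenselyOrdered X] {g : X → X} {a b : X} (hab : a ≤ b)
    (hg : ContinuousOn g (Icc a b)) (ha : g a = a) (hb : g b = b) :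
    SurjOn g (Icc a b) (Icc a b) := by
  simpa only [SurjOn, ha, hb] using intermediate_value_Icc hab hg

theorem stmt17_general {ι X : Type*} [LinearOrder X] [UniformSpace X] {p : Filter ι} [p.NeBot]
    {fn : ι → X → ℝ} {f : X → ℝ} {α : ι → X → X} {S : Set X} (h : TendstoSkorokhodOn fn f α p S)
    {x : X} {L : ℝ} (hright : ContinuousWithinAt f (S ∩ Ici x) x)
    (hleft : Tendsto f (𝓝[S ∩ Iio x] x) (𝓝 L)) (hL : L ≤ f x)
    {u : ι → X} (huS : ∀ n, u n ∈ S) (hu : Tendsto u p (𝓝 x)) :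
    L ≤ liminf (fun n => fn n (u n)) p ∧
      liminf (fun n => fn n (u n)) p ≤ limsup (fun n => fn n (u n)) p ∧
      limsup (fun n => fn n (u n)) p ≤ f x := by
  obtain ⟨s, hs, hclose⟩ := h.exists_tendsto_nhdsWithin huS hu
  refine liminf_limsup_bounds_of_eventually (eventually_gt_of_tendsto_uniformity hclose ?_)
    (eventually_lt_of_tendsto_uniformity hclose ?_)
  · exact fun a ha => hs.eventually (eventually_const_lt_of_tendsto_left_of_le hright hleft hL ha)
  · exact fun b hb =>
      hs.eventually (upperSemicontinuousWithinAt_of_tendsto_left_of_le hright hleft hL b hb)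

/-- if `f n → f` in the Skorohod sense on `[0,1]` (via time changes
`α n`), `f` has only nonnegative jumps, and `c n → c` uniformly on `[0,T]` with `c`
continuous, then for every `t ∈ [0,T]`,
`f(c(t)−) ≤ liminf f n (c n t) ≤ limsup f n (c n t) ≤ f(c(t))`. -/
theorem stmt17
    (f : ℝ → ℝ) (fn : ℕ → ℝ → ℝ)
    -- f, fn : [0,∞) → [0,∞) càdlàg
    (hf_nonneg : ∀ x ≥ (0:ℝ), 0 ≤ f x)
    (hfn_nonneg : ∀ n, ∀ x ≥ (0:ℝ), 0 ≤ fn n x)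
    (hf_rc : ∀ x ≥ (0:ℝ), ContinuousWithinAt f (Set.Ici x) x)
    (hfn_rc : ∀ n, ∀ x ≥ (0:ℝ), ContinuousWithinAt (fn n) (Set.Ici x) x)
    (hfn_ll : ∀ n, ∀ x > (0:ℝ), ∃ L, Tendsto (fn n) (𝓝[<] x) (𝓝 L))
    -- fm is the left-limit function of f, with the convention f(0−) := f(0),
    -- and f has only nonnegative jumps
    (fm : ℝ → ℝ)
    (hfm : ∀ x > (0:ℝ), Tendsto f (𝓝[<] x) (𝓝 (fm x)))
    (hfm0 : fm 0 = f 0)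
    (hjump : ∀ x > (0:ℝ), fm x ≤ f x)
    -- Skorohod convergence of fn to f on [0,1] via homeomorphisms α n
    (α : ℕ → ℝ → ℝ)
    (hα : ∀ n, ContinuousOn (α n) (Set.Icc 0 1) ∧ StrictMonoOn (α n) (Set.Icc 0 1) ∧
      α n 0 = 0 ∧ α n 1 = 1 ∧ Set.MapsTo (α n) (Set.Icc 0 1) (Set.Icc 0 1))
    (hconv : ∀ ε > (0:ℝ), ∃ N : ℕ, ∀ n ≥ N, ∀ s ∈ Set.Icc (0:ℝ) 1,
      |fn n (α n s) - f s| < ε ∧ |α n s - s| < ε)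
    -- the time changes
    (T : ℝ) (hT : 0 < T)
    (c : ℝ → ℝ) (cn : ℕ → ℝ → ℝ)
    (hc_cont : ContinuousOn c (Set.Icc 0 T))
    (hc_range : ∀ t ∈ Set.Icc (0:ℝ) T, c t ∈ Set.Icc (0:ℝ) 1)
    (hcn_range : ∀ n, ∀ t ∈ Set.Icc (0:ℝ) T, cn n t ∈ Set.Icc (0:ℝ) 1)
    (hcn_conv : TendstoUniformlyOn (fun n => cn n) c atTop (Set.Icc 0 T)) :
    ∀ t ∈ Set.Icc (0:ℝ) T,
      fm (c t) ≤ Filter.liminf (fun n => fn n (cn n t)) atTop ∧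
      Filter.liminf (fun n => fn n (cn n t)) atTop ≤
        Filter.limsup (fun n => fn n (cn n t)) atTop ∧
      Filter.limsup (fun n => fn n (cn n t)) atTop ≤ f (c t) := by
  intro t ht
  obtain ⟨h0, -⟩ := hc_range t ht
  have hle : fm (c t) ≤ f (c t) := h0.eq_or_lt.elim (fun h => h ▸ hfm0.le) (hjump _)
  have hsurj : ∀ n, SurjOn (α n) (Icc 0 1) (Icc 0 1) := fun n =>
    surjOn_Icc_self_of_continuousOn zero_le_one (hα n).1 (hα n).2.2.1 (hα n).2.2.2.1
  exact stmt17_general (.of_forall_dist_lt hsurj hconv) ((hf_rc _ h0).mono inter_subset_right)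
    (tendsto_nhdsWithin_inter_Iio_of_subset_Ici Icc_subset_Ici_self (hfm _)) hle
    (hcn_range · t ht) (hcn_conv.tendsto_at ht)
end
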